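/- Let β and b satisfy hypotheses (i)–(ii), let T > 0, let u ∈ L^∞((0,T)×ℝ^d) be measurable, and set Ψ(t,x) := Φ(u(t,x)) and B(t,x) := b(x,u(t,x)), where Φ(r) = β(r)/r for r ≠ 0 and Φ(0) = β'(0) (so that Ψ and B are bounded and Ψ ≥ γ0 > 0 a.e.). Then for each v0 ∈ L¹(ℝ^d) ∩ L^∞(ℝ^d), the linearized Fokker–Planck equation ∂_t v − Δ(Ψ v) + div(B v) = 0 with initial datum v0 has at most one distributional solution v such that t ↦ v(t) is continuous from [0,T] to L¹(ℝ^d) and v ∈ L^∞((0,T)×ℝ^d); i.e., if v₁ and v₂ are two such solutions then v₁(t,x) = v₂(t,x) for every t ∈ [0,T] and a.e. x ∈ ℝ^d. -/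

import Mathlib

open MeasureTheory Filter Set

noncomputable section

/-- The Laplacian of a function on `ℝ^d` (sum of second partial derivatives). -/
noncomputable def lap {d : ℕ} (f : EuclideanSpace ℝ (Fin d) → ℝ)
    (x : EuclideanSpace ℝ (Fin d)) : ℝ :=
  ∑ i, fderiv ℝ (fun y => fderiv ℝ f y (EuclideanSpace.single i 1)) x
    (EuclideanSpace.single i 1)

/-- Hypothesis (i): `β(0) = 0`, `β ∈ C¹(ℝ)`, and strong monotonicity with constant `γ0 > 0`. -/
def HypBeta (β : ℝ → ℝ) (γ0 : ℝ) : Prop :=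
  β 0 = 0 ∧ ContDiff ℝ 1 β ∧ 0 < γ0 ∧
    ∀ r1 r2 : ℝ, γ0 * (r1 - r2) ^ 2 ≤ (β r1 - β r2) * (r1 - r2)

/-- Hypothesis (ii) on the drift `b : ℝ^d × ℝ → ℝ^d`: `b` is `C¹`, bounded, `b(x,0) = 0`,
`∂_r b` is bounded on `ℝ^d × [-M,M]` for every `M > 0`, and
`δ(r) = sup_x |∇_x b(x,r)|` is a bounded continuous function of `r`. -/
def HypB {d : ℕ} (b : EuclideanSpace ℝ (Fin d) → ℝ → EuclideanSpace ℝ (Fin d)) : Prop :=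
  ContDiff ℝ 1 (fun p : EuclideanSpace ℝ (Fin d) × ℝ => b p.1 p.2) ∧
  (∃ C, ∀ x r, ‖b x r‖ ≤ C) ∧
  (∀ x, b x 0 = 0) ∧
  (∀ M > (0 : ℝ), ∃ C, ∀ x r, |r| ≤ M → ‖deriv (fun s => b x s) r‖ ≤ C) ∧
  (∃ δb : ℝ → ℝ, Continuous δb ∧ (∃ C, ∀ r, δb r ≤ C) ∧
    ∀ r, IsLUB (range fun x => ‖fderiv ℝ (fun y => b y r) x‖) (δb r))

/-- `v` is a distributional solution on `[0,T]` of the linear Fokker–Planck equation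
`∂_t v − Δ(Ψ v) + div(B v) = 0`, `v(0) = v0`: each `v(t)` is in `L¹`,
`t ↦ v(t,x)dx` is narrowly continuous on `[0,T]`, the weak formulation holds against all
test functions `φ ∈ C_c^∞((0,T) × ℝ^d)`, and the initial condition holds a.e. -/
def IsLinDistSol {d : ℕ} (T : ℝ) (Ψ : ℝ → EuclideanSpace ℝ (Fin d) → ℝ)
    (B : ℝ → EuclideanSpace ℝ (Fin d) → EuclideanSpace ℝ (Fin d))
    (v0 : EuclideanSpace ℝ (Fin d) → ℝ) (v : ℝ → EuclideanSpace ℝ (Fin d) → ℝ) : Prop :=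
  (∀ t ∈ Icc 0 T, Integrable (v t)) ∧
  (∀ ψ : EuclideanSpace ℝ (Fin d) → ℝ, Continuous ψ → (∃ C, ∀ x, |ψ x| ≤ C) →
    ∀ s ∈ Icc (0 : ℝ) T,
      Tendsto (fun t => ∫ x, v t x * ψ x) (nhdsWithin s (Icc 0 T))
        (nhds (∫ x, v s x * ψ x))) ∧
  (∀ φ : ℝ → EuclideanSpace ℝ (Fin d) → ℝ,
    ContDiff ℝ (⊤ : ℕ∞) (Function.uncurry φ) →
    HasCompactSupport (Function.uncurry φ) →
    (∀ p ∈ tsupport (Function.uncurry φ), 0 < p.1 ∧ p.1 < T) →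
    (∫ t in Ioo (0 : ℝ) T, ∫ x,
      (v t x * deriv (fun s => φ s x) t
        + Ψ t x * v t x * lap (φ t) x
        + v t x * fderiv ℝ (φ t) x (B t x))) = 0) ∧
  (∀ᵐ x, v 0 x = v0 x)

/-!
The difference `w` of two solutions solves the equation with zero initial datum, and its energy
`E(t) = ∫ (1 + 4π²|k|²)⁻¹ |ŵ(t,k)|² dk`, a squared `H⁻¹` norm, is differentiated along the flow on
the Fourier side, where the equation reads `∂ₜŵ = -4π²|k|² (Ψw)^ - 2πi k · (Bw)^`. Writing
`4π²|k|² (1 + 4π²|k|²)⁻¹ = 1 - (1 + 4π²|k|²)⁻¹`, the leading term is `-2∫ Ψ w² ≤ -2γ ‖w‖²` by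
Plancherel, and every other term is at most `c ‖w‖ E^{1/2}` because `Ψ` and `B` are bounded. The
ellipticity `γ > 0` absorbs `‖w‖`, leaving `E' ≤ c' E`, and Grönwall's inequality gives `E = 0`.
-/

lemma integrable_inner_of_memLp_two {α 𝕜 F : Type*} [MeasurableSpace α] {μ : Measure α}
    [RCLike 𝕜] [NormedAddCommGroup F] [InnerProductSpace 𝕜 F] {f g : α → F}
    (hf : MemLp f 2 μ) (hg : MemLp g 2 μ) : Integrable (fun x => inner 𝕜 (f x) (g x)) μ :=
  (hf.norm.integrable_mul hg.norm).mono (hf.1.inner hg.1)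
    (ae_of_all _ fun x => by simpa using norm_inner_le_norm (𝕜 := 𝕜) (f x) (g x))

section Fourier

open scoped FourierTransform SchwartzMap

variable {E F : Type*} [NormedAddCommGroup E] [InnerProductSpace ℝ E]

lemma exists_schwartzMap_eq_ofReal {g : E → ℝ} (hg : ContDiff ℝ (⊤ : ℕ∞) g)
    (hgc : HasCompactSupport g) : ∃ G : 𝓢(E, ℂ), ∀ x, G x = (g x : ℂ) :=
  ⟨(hgc.comp_left (g := fun r : ℝ => (r : ℂ)) Complex.ofReal_zero).toSchwartzMap
    (Complex.ofRealCLM.contDiff.comp hg), fun _ => rfl⟩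

variable [FiniteDimensional ℝ E] [MeasurableSpace E] [BorelSpace E]

lemma continuous_fourier [NormedAddCommGroup F] [NormedSpace ℂ F] {f : E → F}
    (hf : Integrable f) : Continuous (𝓕 f) :=
  VectorFourier.fourierIntegral_continuous Real.continuous_fourierChar continuous_inner hf

section Complete

variable [NormedAddCommGroup F] [NormedSpace ℂ F] [CompleteSpace F]

lemma integral_schwartz_fourier_smul_eq {f : E → F}
    (hf : Integrable f) (g : 𝓢(E, ℂ)) :
    ∫ x, (𝓕 g : 𝓢(E, ℂ)) x • f x = ∫ k, g k • 𝓕 f k := by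
  simpa only [flip_innerₗ] using! VectorFourier.integral_fourierIntegral_smul_eq_flip
    (L := innerₗ E) (μ := volume) (ν := volume) Real.continuous_fourierChar continuous_inner
    g.integrable hf

lemma ae_eq_zero_of_fourier_ae_eq_zero {f : E → F} (hf : Integrable f) (h : 𝓕 f =ᵐ[volume] 0) :
    f =ᵐ[volume] 0 := by
  refine ae_eq_zero_of_integral_contDiff_smul_eq_zero hf.locallyIntegrable fun g hg hgc => ?_
  obtain ⟨G, hG⟩ := exists_schwartzMap_eq_ofReal hg hgc
  have hflip := integral_schwartz_fourier_smul_eq hf (𝓕⁻ G : 𝓢(E, ℂ))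
  rw [FourierTransform.fourier_fourierInv_eq] at hflip
  simp only [hG, Complex.coe_smul] at hflip
  rw [hflip]
  refine integral_eq_zero_of_ae ?_
  filter_upwards [h] with k hk
  simp [hk]

end Complete

section Plancherel

variable [NormedAddCommGroup F] [InnerProductSpace ℂ F] [CompleteSpace F] {f g : E → F}

lemma fourier_toLp_ae_eq (hf₁ : Integrable f) (hf₂ : MemLp f 2) :
    (𝓕 (hf₂.toLp f) : Lp (α := E) F 2) =ᵐ[volume] 𝓕 f := by
  refine ae_eq_of_integral_contDiff_smul_eq ((Lp.memLp _).locallyIntegrable one_le_two)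
    (continuous_fourier hf₁).locallyIntegrable fun g hg hgc => ?_
  obtain ⟨G, hG⟩ := exists_schwartzMap_eq_ofReal hg hgc
  have hdistr := congrArg (fun D : 𝓢'(E, F) => D G)
    (Lp.fourier_toTemperedDistribution_eq (hf₂.toLp f))
  simp only [TemperedDistribution.fourier_apply, Lp.toTemperedDistribution_apply] at hdistr
  have hrep : ∫ x, (𝓕 G : 𝓢(E, ℂ)) x • (hf₂.toLp f) x = ∫ x, (𝓕 G : 𝓢(E, ℂ)) x • f x :=
    integral_congr_ae (hf₂.coeFn_toLp.mono fun x hx => congrArg _ hx)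
  rw [hrep, integral_schwartz_fourier_smul_eq hf₁] at hdistr
  simpa only [hG, Complex.coe_smul] using hdistr.symm

lemma memLp_two_fourier (hf₁ : Integrable f) (hf₂ : MemLp f 2) : MemLp (𝓕 f) 2 :=
  (memLp_congr_ae (fourier_toLp_ae_eq hf₁ hf₂)).1 (Lp.memLp _)

lemma integral_inner_fourier (hf₁ : Integrable f) (hf₂ : MemLp f 2) (hg₁ : Integrable g)
    (hg₂ : MemLp g 2) : ∫ k, inner ℂ (𝓕 f k) (𝓕 g k) = ∫ x, inner ℂ (f x) (g x) := by
  have hLp := Lp.inner_fourier_eq (hf₂.toLp f) (hg₂.toLp g)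
  rw [L2.inner_def, L2.inner_def] at hLp
  convert hLp using 1
  · refine integral_congr_ae ?_
    filter_upwards [fourier_toLp_ae_eq hf₁ hf₂, fourier_toLp_ae_eq hg₁ hg₂] with x h₁ h₂
    rw [h₁, h₂]
  · refine integral_congr_ae ?_
    filter_upwards [hf₂.coeFn_toLp, hg₂.coeFn_toLp] with x h₁ h₂
    rw [h₁, h₂]

end Plancherel

/-- The Fourier transform of a real-valued function. -/
def realFourier (f : E → ℝ) : E → ℂ := 𝓕 fun x => (f x : ℂ)

variable {f g : E → ℝ}

lemma realFourier_eq_integral (f : E → ℝ) (k : E) :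
    realFourier f k = ∫ x, Complex.exp (↑(-(2 * Real.pi * inner ℝ x k)) * Complex.I) * f x := by
  simp only [realFourier, Real.fourier_eq', smul_eq_mul]
  norm_num

lemma norm_realFourier_le (f : E → ℝ) (k : E) : ‖realFourier f k‖ ≤ ∫ x, |f x| := by
  rw [realFourier_eq_integral]
  refine (norm_integral_le_integral_norm _).trans_eq (integral_congr_ae (ae_of_all _ fun x => ?_))
  simp only [norm_mul, Complex.norm_exp_ofReal_mul_I, one_mul, Complex.norm_real, Real.norm_eq_abs]

lemma continuous_realFourier (hf : Integrable f) : Continuous (realFourier f) :=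
  continuous_fourier hf.ofReal

lemma measurable_realFourier_uncurry {Ω : Type*} [MeasurableSpace Ω] {w : Ω → E → ℝ}
    (hw : Measurable (Function.uncurry w)) :
    Measurable fun p : Ω × E => realFourier (w p.1) p.2 := by
  simp only [realFourier_eq_integral]
  refine (StronglyMeasurable.integral_prod_right (f := fun (p : Ω × E) x =>
    Complex.exp (↑(-(2 * Real.pi * inner ℝ x p.2)) * Complex.I) * w p.1 x) ?_).measurable
  refine Measurable.stronglyMeasurable (.mul ?_ ?_)
  · fun_prop
  · exact Complex.measurable_ofReal.comp (hw.comp (by fun_prop : Measurable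
      fun q : (Ω × E) × E => (q.1.1, q.2)))

lemma ae_eq_zero_of_realFourier_ae_eq_zero (hf : Integrable f)
    (h : realFourier f =ᵐ[volume] 0) : f =ᵐ[volume] 0 := by
  filter_upwards [ae_eq_zero_of_fourier_ae_eq_zero hf.ofReal h] with x hx
  exact Complex.ofReal_eq_zero.1 hx

lemma memLp_two_realFourier (hf₁ : Integrable f) (hf₂ : MemLp f 2) : MemLp (realFourier f) 2 :=
  memLp_two_fourier hf₁.ofReal hf₂.ofReal

lemma integrable_inner_realFourier (hf₁ : Integrable f) (hf₂ : MemLp f 2) (hg₁ : Integrable g)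
    (hg₂ : MemLp g 2) : Integrable fun k => inner ℝ (realFourier f k) (realFourier g k) :=
  integrable_inner_of_memLp_two (memLp_two_realFourier hf₁ hf₂) (memLp_two_realFourier hg₁ hg₂)

lemma integral_inner_realFourier (hf₁ : Integrable f) (hf₂ : MemLp f 2) (hg₁ : Integrable g)
    (hg₂ : MemLp g 2) :
    ∫ k, inner ℝ (realFourier f k) (realFourier g k) = ∫ x, f x * g x := by
  have hplancherel : ∫ k, inner ℂ (realFourier f k) (realFourier g k)
      = ∫ x, inner ℂ (f x : ℂ) (g x : ℂ) :=
    integral_inner_fourier hf₁.ofReal hf₂.ofReal hg₁.ofReal hg₂.ofReal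
  have hint : Integrable fun k => inner ℂ (realFourier f k) (realFourier g k) :=
    integrable_inner_of_memLp_two (memLp_two_realFourier hf₁ hf₂) (memLp_two_realFourier hg₁ hg₂)
  calc ∫ k, inner ℝ (realFourier f k) (realFourier g k)
      = (∫ k, inner ℂ (realFourier f k) (realFourier g k)).re := integral_re hint
    _ = (∫ x, ((f x * g x : ℝ) : ℂ)).re := by
        rw [hplancherel]
        simp only [RCLike.inner_apply, Complex.conj_ofReal, Complex.ofReal_mul, mul_comm]
    _ = ∫ x, f x * g x := by rw [integral_complex_ofReal, Complex.ofReal_re]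

lemma integrable_norm_sq_realFourier (hf₁ : Integrable f) (hf₂ : MemLp f 2) :
    Integrable fun k => ‖realFourier f k‖ ^ 2 :=
  (memLp_two_realFourier hf₁ hf₂).integrable_norm_pow two_ne_zero

lemma integral_norm_sq_realFourier (hf₁ : Integrable f) (hf₂ : MemLp f 2) :
    ∫ k, ‖realFourier f k‖ ^ 2 = ∫ x, f x ^ 2 := by
  simpa only [real_inner_self_eq_norm_sq, ← sq] using integral_inner_realFourier hf₁ hf₂ hf₁ hf₂

end Fourier

section OneVariable

/-- Smooth functions with compact support contained in `U`. -/
structure IsTestFunction {E : Type*} [NormedAddCommGroup E] [NormedSpace ℝ E] (U : Set E)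
    (η : E → ℝ) : Prop where
  contDiff : ContDiff ℝ (⊤ : ℕ∞) η
  hasCompactSupport : HasCompactSupport η
  tsupport_subset : tsupport η ⊆ U

variable {a b : ℝ}

lemma integral_eq_intervalIntegral_of_tsupport_subset_Ioo {θ : ℝ → ℝ} (hab : a ≤ b)
    (hθ : tsupport θ ⊆ Ioo a b) : ∫ x, θ x = ∫ x in a..b, θ x := by
  rw [intervalIntegral.integral_of_le hab]
  refine (setIntegral_eq_integral_of_forall_compl_eq_zero fun x hx => ?_).symm
  exact image_eq_zero_of_notMem_tsupport fun h => hx (Ioo_subset_Ioc_self (hθ h))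

lemma exists_Icc_superset_of_isCompact_subset_Ioo {K : Set ℝ} (hK : IsCompact K)
    (hsub : K ⊆ Ioo a b) : ∃ c d, a < c ∧ d < b ∧ K ⊆ Icc c d := by
  rcases K.eq_empty_or_nonempty with rfl | hne
  · exact ⟨a + 1, b - 1, by linarith, by linarith, empty_subset _⟩
  · exact ⟨sInf K, sSup K, (hsub (hK.sInf_mem hne)).1, (hsub (hK.sSup_mem hne)).2,
      fun x hx => ⟨csInf_le hK.bddBelow hx, le_csSup hK.bddAbove hx⟩⟩

lemma support_primitive_subset_Icc {c d : ℝ} {θ : ℝ → ℝ} (hθ : Continuous θ) (hac : a < c)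
    (hdb : d ≤ b) (hsupp : Function.support θ ⊆ Icc c d) (hmean : ∫ s in a..b, θ s = 0) :
    Function.support (fun t => ∫ s in a..t, θ s) ⊆ Icc c d := by
  have hzero {x y : ℝ} (h : ∀ s ∈ Icc c d, s ∉ uIoc x y) : ∫ s in x..y, θ s = 0 :=
    intervalIntegral.integral_zero_ae (ae_of_all _ fun s hs => by_contra fun hs' =>
      h s (hsupp hs') hs)
  intro t ht
  by_contra hout
  rcases not_and_or.1 hout with hlt | hgt
  · exact ht (hzero fun s hs hs' => hs'.2.not_gt (max_lt (hac.trans_le hs.1) (by linarith [hs.1])))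
  · have hrest : ∫ s in t..b, θ s = 0 :=
      hzero fun s hs hs' => hs'.1.not_ge (le_min (by linarith [hs.2]) (hs.2.trans hdb))
    have hsplit := intervalIntegral.integral_add_adjacent_intervals
      (hθ.intervalIntegrable (μ := volume) a t) (hθ.intervalIntegrable t b)
    exact ht (by linarith)

lemma exists_isTestFunction_deriv_eq {θ : ℝ → ℝ} (hθ : IsTestFunction (Ioo a b) θ)
    (hmean : ∫ s in a..b, θ s = 0) : ∃ η, IsTestFunction (Ioo a b) η ∧ deriv η = θ := by
  have hcont := hθ.contDiff.continuous
  have hderiv (t : ℝ) : HasDerivAt (fun t => ∫ s in a..t, θ s) (θ t) t :=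
    intervalIntegral.integral_hasDerivAt_right (hcont.intervalIntegrable _ _)
      hcont.aestronglyMeasurable.stronglyMeasurableAtFilter hcont.continuousAt
  have hderiv_eq : deriv (fun t => ∫ s in a..t, θ s) = θ := funext fun t => (hderiv t).deriv
  obtain ⟨c, d, hac, hdb, hcd⟩ :=
    exists_Icc_superset_of_isCompact_subset_Ioo hθ.hasCompactSupport hθ.tsupport_subset
  have hsupp : tsupport (fun t => ∫ s in a..t, θ s) ⊆ Icc c d :=
    closure_minimal (support_primitive_subset_Icc hcont hac hdb.le
      ((subset_tsupport θ).trans hcd) hmean) isClosed_Icc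
  refine ⟨fun t => ∫ s in a..t, θ s, ⟨?_, ?_, hsupp.trans (Icc_subset_Ioo hac hdb)⟩, hderiv_eq⟩
  · exact contDiff_infty_iff_deriv.2
      ⟨fun t => (hderiv t).differentiableAt, hderiv_eq.symm ▸ hθ.contDiff⟩
  · exact isCompact_Icc.of_isClosed_subset (isClosed_tsupport _) hsupp

lemma exists_isTestFunction_Ioo_integral_eq_one (hab : a < b) :
    ∃ ρ, IsTestFunction (Ioo a b) ρ ∧ ∫ s in a..b, ρ s = 1 := by
  let bump : ContDiffBump ((a + b) / 2) := ⟨(b - a) / 8, (b - a) / 4, by linarith, by linarith⟩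
  have hsupp : tsupport (bump.normed volume) ⊆ Ioo a b := by
    rw [bump.tsupport_normed_eq, Real.closedBall_eq_Icc]
    exact Icc_subset_Ioo (by simp only [bump]; linarith) (by simp only [bump]; linarith)
  refine ⟨bump.normed volume, ⟨bump.contDiff_normed, bump.hasCompactSupport_normed, hsupp⟩, ?_⟩
  rw [← integral_eq_intervalIntegral_of_tsupport_subset_Ioo hab.le hsupp, bump.integral_normed]

lemma isTestFunction_sub_const_mul {E : Type*} [NormedAddCommGroup E] [NormedSpace ℝ E]
    {U : Set E} {θ ρ : E → ℝ} (hθ : IsTestFunction U θ) (hρ : IsTestFunction U ρ) (c : ℝ) :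
    IsTestFunction U fun x => θ x - c * ρ x where
  contDiff := hθ.contDiff.sub (contDiff_const.mul hρ.contDiff)
  hasCompactSupport := hθ.hasCompactSupport.sub hρ.hasCompactSupport.mul_left
  tsupport_subset := (tsupport_sub _ _).trans <| union_subset hθ.tsupport_subset <|
    (closure_mono (Function.support_mul_subset_right _ _)).trans hρ.tsupport_subset

-- Subtracting a multiple of `ρ` makes `θ` mean-free, hence the derivative of a test function.
lemma integral_mul_eq_of_integral_mul_deriv_eq_zero {f ρ θ : ℝ → ℝ}
    (hf : IntervalIntegrable f volume a b)
    (h : ∀ η, IsTestFunction (Ioo a b) η → ∫ t in a..b, f t * deriv η t = 0)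
    (hρ : IsTestFunction (Ioo a b) ρ) (hρ_mean : ∫ s in a..b, ρ s = 1)
    (hθ : IsTestFunction (Ioo a b) θ) :
    ∫ s in a..b, f s * θ s = (∫ s in a..b, θ s) * ∫ s in a..b, f s * ρ s := by
  have hint {φ : ℝ → ℝ} (hφ : IsTestFunction (Ioo a b) φ) : IntervalIntegrable φ volume a b :=
    hφ.contDiff.continuous.intervalIntegrable _ _
  have hfmul {φ : ℝ → ℝ} (hφ : IsTestFunction (Ioo a b) φ) :
      IntervalIntegrable (fun s => f s * φ s) volume a b :=
    hf.mul_continuousOn hφ.contDiff.continuous.continuousOn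
  set m := ∫ s in a..b, θ s
  have hmean : ∫ s in a..b, (θ s - m * ρ s) = 0 := by
    rw [intervalIntegral.integral_sub (hint hθ) ((hint hρ).const_mul m),
      intervalIntegral.integral_const_mul, hρ_mean, mul_one, sub_self]
  obtain ⟨η, hη, hη_deriv⟩ :=
    exists_isTestFunction_deriv_eq (isTestFunction_sub_const_mul hθ hρ m) hmean
  have hvanish := h η hη
  simp only [hη_deriv, mul_sub, mul_left_comm (f _) m] at hvanish
  rw [intervalIntegral.integral_sub (hfmul hθ) ((hfmul hρ).const_mul m),
    intervalIntegral.integral_const_mul] at hvanish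
  exact sub_eq_zero.1 hvanish

lemma exists_ae_eq_const_of_integral_mul_deriv_eq_zero {f : ℝ → ℝ} (hab : a < b)
    (hf : IntervalIntegrable f volume a b)
    (h : ∀ η, IsTestFunction (Ioo a b) η → ∫ t in a..b, f t * deriv η t = 0) :
    ∃ c, ∀ᵐ t, t ∈ Ioo a b → f t = c := by
  obtain ⟨ρ, hρ, hρ_mean⟩ := exists_isTestFunction_Ioo_integral_eq_one hab
  set c := ∫ s in a..b, f s * ρ s
  have hloc : LocallyIntegrableOn (fun t => f t - c) (Ioo a b) :=
    IntegrableOn.locallyIntegrableOn <| Integrable.sub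
      ((intervalIntegrable_iff_integrableOn_Ioo_of_le hab.le).1 hf) (integrableOn_const (by simp))
  have hzero : ∀ᵐ t, t ∈ Ioo a b → f t - c = 0 := by
    refine isOpen_Ioo.ae_eq_zero_of_integral_contDiff_smul_eq_zero hloc fun θ hθ hθc hθs => ?_
    have hsupp : tsupport (fun x => θ x • (f x - c)) ⊆ Ioo a b :=
      (closure_mono (Function.support_smul_subset_left θ _)).trans hθs
    calc ∫ x, θ x • (f x - c) = ∫ x in a..b, (f x * θ x - θ x * c) := by
          rw [integral_eq_intervalIntegral_of_tsupport_subset_Ioo hab.le hsupp]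
          simp only [smul_eq_mul, mul_sub, mul_comm (θ _) (f _)]
      _ = (∫ x in a..b, f x * θ x) - (∫ x in a..b, θ x) * c := by
          rw [intervalIntegral.integral_sub (hf.mul_continuousOn hθ.continuous.continuousOn)
            ((hθ.continuous.intervalIntegrable _ _).mul_const c),
            intervalIntegral.integral_mul_const]
      _ = 0 := sub_eq_zero.2 <|
          integral_mul_eq_of_integral_mul_deriv_eq_zero hf h hρ hρ_mean ⟨hθ, hθc, hθs⟩
  exact ⟨c, hzero.mono fun t ht ht' => sub_eq_zero.1 (ht ht')⟩

lemma intervalIntegral_mul_primitive_add_primitive_mul {f g : ℝ → ℝ}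
    (hf : IntervalIntegrable f volume a b) (hg : IntervalIntegrable g volume a b) :
    ∫ s in a..b, (f s * (∫ r in a..s, g r) + (∫ r in a..s, f r) * g s)
      = (∫ s in a..b, f s) * ∫ s in a..b, g s := by
  have hF := hf.absolutelyContinuousOnInterval_intervalIntegral (c := a) left_mem_uIcc
  have hG := hg.absolutelyContinuousOnInterval_intervalIntegral (c := a) left_mem_uIcc
  have hparts := hF.integral_deriv_mul_eq_sub hG
  simp only [intervalIntegral.integral_same, mul_zero, sub_zero] at hparts
  rw [← hparts]
  refine intervalIntegral.integral_congr_ae ?_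
  filter_upwards [hf.ae_hasDerivAt_integral, hg.ae_hasDerivAt_integral] with x hfx hgx hx
  have hx' := uIoc_subset_uIcc hx
  rw [(hfx hx' a left_mem_uIcc).deriv, (hgx hx' a left_mem_uIcc).deriv]

lemma intervalIntegral_primitive_mul_deriv {g η : ℝ → ℝ}
    (hg : IntervalIntegrable g volume a b) (hη : IsTestFunction (Ioo a b) η) :
    ∫ t in a..b, (∫ s in a..t, g s) * deriv η t = -∫ t in a..b, g t * η t := by
  have hη_left : η a = 0 := image_eq_zero_of_notMem_tsupport fun h => (hη.tsupport_subset h).1.false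
  have hη_right : η b = 0 :=
    image_eq_zero_of_notMem_tsupport fun h => (hη.tsupport_subset h).2.false
  have hG := hg.absolutelyContinuousOnInterval_intervalIntegral (c := a) left_mem_uIcc
  have hη_ac : AbsolutelyContinuousOnInterval η a b :=
    (hη.contDiff.of_le (by simp)).contDiffOn.absolutelyContinuousOnInterval
  rw [hG.integral_mul_deriv_eq_deriv_mul hη_ac, hη_left, hη_right]
  simp only [mul_zero, sub_self, zero_sub]
  refine congrArg Neg.neg (intervalIntegral.integral_congr_ae ?_)
  filter_upwards [hg.ae_hasDerivAt_integral] with x hgx hx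
  rw [(hgx (uIoc_subset_uIcc hx) a left_mem_uIcc).deriv]

lemma sub_eq_integral_of_weak_deriv {h g : ℝ → ℝ} (hab : a < b)
    (hh : ContinuousOn h (Icc a b)) (hg : IntervalIntegrable g volume a b)
    (hweak : ∀ η, IsTestFunction (Ioo a b) η →
      ∫ t in a..b, (h t * deriv η t + g t * η t) = 0) {t : ℝ} (ht : t ∈ Icc a b) :
    h t - h a = ∫ s in a..t, g s := by
  set G : ℝ → ℝ := fun t => ∫ s in a..t, g s
  have hG : ContinuousOn G (Icc a b) := uIcc_of_le hab.le ▸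
    (hg.absolutelyContinuousOnInterval_intervalIntegral left_mem_uIcc).continuousOn
  have hhint : IntervalIntegrable h volume a b := hh.intervalIntegrable_of_Icc hab.le
  have hGint : IntervalIntegrable G volume a b := hG.intervalIntegrable_of_Icc hab.le
  obtain ⟨c, hc⟩ := exists_ae_eq_const_of_integral_mul_deriv_eq_zero hab (hhint.sub hGint)
    fun η hη => by
      have hη_deriv : Continuous (deriv η) := hη.contDiff.continuous_deriv (by simp)
      have hη_cont := hη.contDiff.continuous
      have hweakη := hweak η hη
      rw [intervalIntegral.integral_add (hhint.mul_continuousOn hη_deriv.continuousOn)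
        (hg.mul_continuousOn hη_cont.continuousOn)] at hweakη
      simp only [sub_mul]
      rw [intervalIntegral.integral_sub (hhint.mul_continuousOn hη_deriv.continuousOn)
        (hGint.mul_continuousOn hη_deriv.continuousOn),
        intervalIntegral_primitive_mul_deriv hg hη]
      linarith
  have hconst : EqOn (fun t => h t - G t) (fun _ => c) (Icc a b) := by
    refine Measure.eqOn_Icc_of_ae_eq (μ := volume) hab.ne ?_ (hh.sub hG) continuousOn_const
    rwa [← restrict_Ioo_eq_restrict_Icc, EventuallyEq, ae_restrict_iff' measurableSet_Ioo]
  have ht' := hconst ht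
  have ha' := hconst (left_mem_Icc.2 hab.le)
  simp only [G, intervalIntegral.integral_same] at ht' ha'
  linarith

lemma norm_sq_primitive_eq {F : ℝ → ℂ} (hF : IntervalIntegrable F volume a b) :
    ‖∫ s in a..b, F s‖ ^ 2 = ∫ s in a..b, 2 * inner ℝ (∫ r in a..s, F r) (F s) := by
  have hre : IntervalIntegrable (fun s => (F s).re) volume a b := ⟨hF.1.re, hF.2.re⟩
  have him : IntervalIntegrable (fun s => (F s).im) volume a b := ⟨hF.1.im, hF.2.im⟩
  have hre_comm {s : ℝ} (hs : s ∈ uIcc a b) :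
      (∫ r in a..s, F r).re = ∫ r in a..s, (F r).re :=
    (Complex.reCLM.intervalIntegral_comp_comm (hF.mono_set (uIcc_subset_uIcc_left hs))).symm
  have him_comm {s : ℝ} (hs : s ∈ uIcc a b) :
      (∫ r in a..s, F r).im = ∫ r in a..s, (F r).im :=
    (Complex.imCLM.intervalIntegral_comp_comm (hF.mono_set (uIcc_subset_uIcc_left hs))).symm
  have hint {f : ℝ → ℝ} (hf : IntervalIntegrable f volume a b) : IntervalIntegrable
      (fun s => f s * (∫ r in a..s, f r) + (∫ r in a..s, f r) * f s) volume a b := by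
    have hcont := (hf.absolutelyContinuousOnInterval_intervalIntegral
      (c := a) left_mem_uIcc).continuousOn
    exact (hf.mul_continuousOn hcont).add (hf.continuousOn_mul hcont)
  have hre_sq := intervalIntegral_mul_primitive_add_primitive_mul hre hre
  have him_sq := intervalIntegral_mul_primitive_add_primitive_mul him him
  rw [Complex.sq_norm, Complex.normSq_apply, hre_comm right_mem_uIcc, him_comm right_mem_uIcc,
    ← hre_sq, ← him_sq, ← intervalIntegral.integral_add (hint hre)
    (hint him)]
  refine intervalIntegral.integral_congr fun s hs => ?_
  simp only [Complex.inner, Complex.mul_re, Complex.conj_re, Complex.conj_im, hre_comm hs,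
    him_comm hs]
  ring

lemma eq_zero_of_le_mul_integral {N : ℝ → ℝ} {C : ℝ} (hN : ContinuousOn N (Icc a b))
    (hN0 : ∀ t ∈ Icc a b, 0 ≤ N t) (hle : ∀ t ∈ Icc a b, N t ≤ C * ∫ s in a..t, N s) {t : ℝ}
    (ht : t ∈ Icc a b) : N t = 0 := by
  have hab := ht.1.trans ht.2
  have hprim : ContinuousOn (fun t => ∫ s in a..t, N s) (Icc a b) := by
    simpa only [uIcc_of_le hab] using intervalIntegral.continuousOn_primitive_interval
      (μ := volume) (f := N) (a := a) (b := b) (by rw [uIcc_of_le hab]; exact hN.integrableOn_Icc)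
  have hprim0 : ∀ t ∈ Icc a b, 0 ≤ ∫ s in a..t, N s := fun t ht =>
    intervalIntegral.integral_nonneg ht.1 fun s hs => hN0 s ⟨hs.1, hs.2.trans ht.2⟩
  have hderiv : ∀ t ∈ Ico a b, HasDerivWithinAt (fun t => ∫ s in a..t, N s) (N t) (Ici t) t := by
    intro t ht
    have ht' := Ico_subset_Icc_self ht
    have hnhds : Icc a b ∈ nhdsWithin t (Ici t) :=
      mem_of_superset (Icc_mem_nhdsGE ht.2) (Icc_subset_Icc_left ht.1)
    refine intervalIntegral.integral_hasDerivWithinAt_right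
      ((hN.mono (Icc_subset_Icc_right ht.2.le)).intervalIntegrable_of_Icc ht.1)
      ⟨Icc a b, nhdsWithin_mono t Ioi_subset_Ici_self hnhds,
        hN.aestronglyMeasurable measurableSet_Icc⟩
      (((hN t ht').mono_of_mem_nhdsWithin hnhds).mono Ioi_subset_Ici_self)
  have hprim_eq : ‖∫ s in a..t, N s‖ ≤ gronwallBound 0 C 0 (t - a) := by
    refine norm_le_gronwallBound_of_norm_deriv_right_le hprim hderiv (by simp) (fun s hs => ?_) t ht
    have hs' := Ico_subset_Icc_self hs
    rw [Real.norm_of_nonneg (hN0 s hs'), Real.norm_of_nonneg (hprim0 s hs'), add_zero]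
    exact hle s hs'
  rw [gronwallBound_ε0, zero_mul, norm_le_zero_iff] at hprim_eq
  exact le_antisymm ((hle t ht).trans_eq (by rw [hprim_eq, mul_zero])) (hN0 t ht)

end OneVariable

section WeakContinuity

open scoped BoundedContinuousFunction

section UniformBound

variable {X ι : Type*} [TopologicalSpace X]

lemma exists_boundedContinuous_tendsto_sign (g : X →ᵇ ℝ) :
    ∃ ψ : ℕ → X →ᵇ ℝ, (∀ n, ‖ψ n‖ ≤ 1) ∧
      ∀ x, Tendsto (fun n => g x * ψ n x) atTop (nhds |g x|) := by
  have hpos (n : ℕ) (x : X) : 0 < |g x| + 1 / ((n : ℝ) + 1) := by positivity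
  have hbound (n : ℕ) (x : X) : ‖g x / (|g x| + 1 / ((n : ℝ) + 1))‖ ≤ 1 := by
    rw [norm_div, Real.norm_of_nonneg (hpos n x).le, div_le_one (hpos n x), Real.norm_eq_abs]
    exact le_add_of_nonneg_right (by positivity)
  refine ⟨fun n => .ofNormedAddCommGroup (fun x => g x / (|g x| + 1 / ((n : ℝ) + 1)))
    (g.continuous.div (by fun_prop) fun x => (hpos n x).ne') 1 (hbound n),
    fun n => BoundedContinuousFunction.norm_ofNormedAddCommGroup_le _ zero_le_one _, fun x => ?_⟩
  rcases eq_or_ne (g x) 0 with hx | hx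
  · simp [hx]
  · have hdenom := (tendsto_one_div_add_atTop_nhds_zero_nat (𝕜 := ℝ)).const_add |g x|
    have hquot := (hdenom.inv₀ (by simpa using hx)).const_mul (g x * g x)
    rw [add_zero, ← abs_mul_abs_self, mul_inv_cancel_right₀ (abs_ne_zero.2 hx)] at hquot
    simpa only [BoundedContinuousFunction.coe_ofNormedAddCommGroup, div_eq_mul_inv (g x),
      ← mul_assoc, abs_mul_abs_self] using hquot

variable [MeasurableSpace X] [BorelSpace X] {μ : Measure X}

lemma integrable_mul_boundedContinuous {f : X → ℝ} (hf : Integrable f μ) (g : X →ᵇ ℝ) :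
    Integrable (fun x => f x * g x) μ :=
  hf.mul_bdd g.continuous.aestronglyMeasurable (ae_of_all _ g.norm_coe_le_norm)

lemma integral_abs_boundedContinuous_le (g : X →ᵇ ℝ) (hg : Integrable g μ) {c : ℝ}
    (h : ∀ ψ : X →ᵇ ℝ, ‖ψ‖ ≤ 1 → ∫ x, g x * ψ x ∂μ ≤ c) : ∫ x, |g x| ∂μ ≤ c := by
  obtain ⟨ψ, hψ, hlim⟩ := exists_boundedContinuous_tendsto_sign g
  refine le_of_tendsto' (tendsto_integral_of_dominated_convergence (fun x => |g x|)
    (fun n => (integrable_mul_boundedContinuous hg (ψ n)).1) hg.abs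
    (fun n => ae_of_all _ fun x => ?_) (ae_of_all _ hlim)) fun n => h (ψ n) (hψ n)
  rw [norm_mul, Real.norm_eq_abs]
  exact mul_le_of_le_one_right (abs_nonneg _) (((ψ n).norm_coe_le_norm x).trans (hψ n))

lemma integral_abs_le_of_forall_integral_mul_le [NormalSpace X] [μ.WeaklyRegular] {f : X → ℝ}
    (hf : Integrable f μ) {c : ℝ}
    (h : ∀ ψ : X →ᵇ ℝ, ‖ψ‖ ≤ 1 → ∫ x, f x * ψ x ∂μ ≤ c) : ∫ x, |f x| ∂μ ≤ c := by
  refine le_of_forall_pos_le_add fun ε hε => ?_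
  obtain ⟨g, hfg, hg⟩ := hf.exists_boundedContinuous_integral_sub_le (half_pos hε)
  have hdist : Integrable (fun x => ‖f x - g x‖) μ := (hf.sub hg).norm
  have hg_le : ∫ x, |g x| ∂μ ≤ c + ε / 2 := by
    refine integral_abs_boundedContinuous_le g hg fun ψ hψ => ?_
    have hpointwise (x : X) : g x * ψ x ≤ f x * ψ x + ‖f x - g x‖ := by
      have hdiff : |(g x - f x) * ψ x| ≤ |g x - f x| := by
        rw [abs_mul]
        exact mul_le_of_le_one_right (abs_nonneg _) ((ψ.norm_coe_le_norm x).trans hψ)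
      rw [Real.norm_eq_abs, abs_sub_comm]
      linarith [le_abs_self ((g x - f x) * ψ x)]
    have hintegrated := integral_mono (integrable_mul_boundedContinuous hg ψ)
      ((integrable_mul_boundedContinuous hf ψ).add hdist) hpointwise
    rw [integral_add' (integrable_mul_boundedContinuous hf ψ) hdist] at hintegrated
    linarith [h ψ hψ]
  have htriangle := integral_mono hf.abs (hdist.add hg.abs) fun x => by
    simpa using abs_add_le (f x - g x) (g x)
  rw [integral_add' hdist hg.abs] at htriangle
  linarith

lemma exists_clm_eq_integral_mul {f : X → ℝ} (hf : Integrable f μ) :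
    ∃ Λ : (X →ᵇ ℝ) →L[ℝ] ℝ, ∀ ψ, Λ ψ = ∫ x, f x * ψ x ∂μ := by
  refine ⟨LinearMap.mkContinuous
    { toFun := fun ψ => ∫ x, f x * ψ x ∂μ
      map_add' := fun φ ψ => ?_
      map_smul' := fun c ψ => ?_ } (∫ x, |f x| ∂μ) fun ψ => ?_, fun ψ => rfl⟩
  · simp only [BoundedContinuousFunction.add_apply, mul_add]
    exact integral_add (integrable_mul_boundedContinuous hf φ)
      (integrable_mul_boundedContinuous hf ψ)
  · simp only [BoundedContinuousFunction.smul_apply, smul_eq_mul, mul_left_comm,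
      integral_const_mul, RingHom.id_apply]
  · refine (norm_integral_le_integral_norm _).trans ?_
    rw [← integral_mul_const]
    refine integral_mono (integrable_mul_boundedContinuous hf ψ).norm (hf.abs.mul_const _)
      fun x => ?_
    rw [norm_mul, Real.norm_eq_abs]
    exact mul_le_mul_of_nonneg_left (ψ.norm_coe_le_norm x) (abs_nonneg _)

lemma exists_integral_abs_le_of_weakly_bounded [NormalSpace X] [μ.WeaklyRegular]
    {f : ι → X → ℝ} (hf : ∀ i, Integrable (f i) μ)
    (h : ∀ ψ : X →ᵇ ℝ, ∃ C, ∀ i, |∫ x, f i x * ψ x ∂μ| ≤ C) :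
    ∃ K, ∀ i, ∫ x, |f i x| ∂μ ≤ K := by
  choose Λ hΛ using fun i => exists_clm_eq_integral_mul (hf i)
  obtain ⟨K, hK⟩ := banach_steinhaus (g := Λ) fun ψ => by simpa only [hΛ] using! h ψ
  refine ⟨K, fun i => integral_abs_le_of_forall_integral_mul_le (hf i) fun ψ hψ => ?_⟩
  rw [← hΛ]
  exact (le_abs_self _).trans (((Λ i).unit_le_opNorm ψ hψ).trans (hK i))

end UniformBound

section Representative

variable {E ι : Type*} [NormedAddCommGroup E] [InnerProductSpace ℝ E] [FiniteDimensional ℝ E]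
  [MeasurableSpace E] [BorelSpace E] [TopologicalSpace ι]
  [TopologicalSpace.MetrizableSpace ι] [SecondCountableTopology ι] [MeasurableSpace ι]
  [OpensMeasurableSpace ι]

-- The pointwise limit of mollifications: these are jointly measurable, being continuous in `i`.
lemma exists_measurable_uncurry_ae_eq {w : ι → E → ℝ} (hint : ∀ i, Integrable (w i))
    (hcont : ∀ ψ : E →ᵇ ℝ, Continuous fun i => ∫ x, w i x * ψ x) :
    ∃ W : ι → E → ℝ, Measurable (Function.uncurry W) ∧ ∀ i, W i =ᵐ[volume] w i := by
  let φ (n : ℕ) : ContDiffBump (0 : E) :=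
    ⟨1 / ((n : ℝ) + 1), 2 / ((n : ℝ) + 1), by positivity, by gcongr; norm_num⟩
  let A (n : ℕ) (i : ι) : E → ℝ :=
    convolution ((φ n).normed volume) (w i) (ContinuousLinearMap.lsmul ℝ ℝ) volume
  have hA_meas (n : ℕ) : Measurable (Function.uncurry (A n)) := by
    refine measurable_uncurry_of_continuous_of_measurable (fun x => ?_) fun i =>
      ((φ n).hasCompactSupport_normed.continuous_convolution_left _ (φ n).continuous_normed
        (hint i).locallyIntegrable).measurable
    obtain ⟨C, hC⟩ := ((φ n).hasCompactSupport_normed (μ := volume)).exists_bound_of_continuous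
      (φ n).continuous_normed
    convert hcont (.ofNormedAddCommGroup (fun y => (φ n).normed volume (x - y))
      ((φ n).continuous_normed.comp (by fun_prop)) C fun y => hC _) using 2 with i
    simp only [A, convolution_eq_swap, ContinuousLinearMap.lsmul_apply, smul_eq_mul, mul_comm,
      BoundedContinuousFunction.coe_ofNormedAddCommGroup]
  refine ⟨fun i x => limsup (fun n => A n i x) atTop,
    Measurable.limsup (f := fun n (q : ι × E) => A n q.1 q.2) hA_meas, fun i => ?_⟩
  have hradius : Tendsto (fun n => (φ n).rOut) atTop (nhds 0) := by
    simpa [φ, div_eq_mul_inv] using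
      (tendsto_one_div_add_atTop_nhds_zero_nat (𝕜 := ℝ)).const_mul 2
  filter_upwards [ContDiffBump.ae_convolution_tendsto_right_of_locallyIntegrable (K := 2) hradius
    (Eventually.of_forall fun n => by simp [φ, div_eq_mul_inv]) (hint i).locallyIntegrable]
    with x hx
  exact hx.limsup_eq

end Representative

end WeakContinuity

section Laplacian

variable {d : ℕ} {f g : EuclideanSpace ℝ (Fin d) → ℝ}

lemma contDiff_fderiv_apply (hf : ContDiff ℝ (⊤ : ℕ∞) f) (v : EuclideanSpace ℝ (Fin d)) :
    ContDiff ℝ (⊤ : ℕ∞) fun y => fderiv ℝ f y v :=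
  (hf.fderiv_right (m := (⊤ : ℕ∞)) (by simp)).clm_apply contDiff_const

lemma continuous_lap (hf : ContDiff ℝ (⊤ : ℕ∞) f) : Continuous (lap f) :=
  continuous_finsetSum _ fun _ _ =>
    (contDiff_fderiv_apply (contDiff_fderiv_apply hf _) _).continuous

lemma lap_congr_of_eventuallyEq {x : EuclideanSpace ℝ (Fin d)} (h : f =ᶠ[nhds x] g) :
    lap f x = lap g x := by
  refine Finset.sum_congr rfl fun i _ => ?_
  have hfderiv : (fun y => fderiv ℝ f y (EuclideanSpace.single i 1)) =ᶠ[nhds x]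
      fun y => fderiv ℝ g y (EuclideanSpace.single i 1) :=
    (h.fderiv (𝕜 := ℝ)).mono fun y hy => DFunLike.congr_fun hy _
  rw [hfderiv.fderiv_eq]

lemma hasCompactSupport_lap (hf : HasCompactSupport f) : HasCompactSupport (lap f) := by
  refine hf.mono' fun x hx => ?_
  by_contra hxf
  exact hx ((lap_congr_of_eventuallyEq (notMem_tsupport_iff_eventuallyEq.1 hxf)).trans
    (by simp [lap]))

lemma lap_mul (hf : ContDiff ℝ (⊤ : ℕ∞) f) (hg : ContDiff ℝ (⊤ : ℕ∞) g)
    (x : EuclideanSpace ℝ (Fin d)) :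
    lap (fun y => f y * g y) x = f x * lap g x + g x * lap f x +
      2 * ∑ i, fderiv ℝ f x (EuclideanSpace.single i 1) *
        fderiv ℝ g x (EuclideanSpace.single i 1) := by
  have df := hf.differentiable (by simp)
  have dg := hg.differentiable (by simp)
  simp only [lap, Finset.mul_sum, ← Finset.sum_add_distrib]
  refine Finset.sum_congr rfl fun i _ => ?_
  set e := EuclideanSpace.single (𝕜 := ℝ) i (1 : ℝ)
  have dfe := (contDiff_fderiv_apply hf e).differentiable (by simp)
  have dge := (contDiff_fderiv_apply hg e).differentiable (by simp)
  have leibniz : (fun y => fderiv ℝ (fun y => f y * g y) y e) =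
      fun y => f y * fderiv ℝ g y e + g y * fderiv ℝ f y e := by
    ext y
    simp [fderiv_fun_mul (df y) (dg y)]
  rw [leibniz, fderiv_fun_add ((df x).fun_mul (dge x)) ((dg x).fun_mul (dfe x)),
    fderiv_fun_mul (df x) (dge x), fderiv_fun_mul (dg x) (dfe x)]
  simp only [add_apply, smul_apply, smul_eq_mul]
  ring

lemma lap_const_mul (c : ℝ) (f : EuclideanSpace ℝ (Fin d) → ℝ) (x : EuclideanSpace ℝ (Fin d)) :
    lap (fun y => c * f y) x = c * lap f x := by
  have hfderiv (F : EuclideanSpace ℝ (Fin d) → ℝ) (y : EuclideanSpace ℝ (Fin d)) :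
      fderiv ℝ (fun y => c * F y) y = c • fderiv ℝ F y :=
    congrFun (fderiv_const_smul_field (𝕜 := ℝ) (f := F) c) y
  simp only [lap, hfderiv, smul_apply, smul_eq_mul, Finset.mul_sum]

lemma lap_comp_smul (f : EuclideanSpace ℝ (Fin d) → ℝ) (c : ℝ) (x : EuclideanSpace ℝ (Fin d)) :
    lap (fun y => f (c • y)) x = c ^ 2 * lap f (c • x) := by
  have hsecond (e : EuclideanSpace ℝ (Fin d)) :
      fderiv ℝ (fun y => c * fderiv ℝ f (c • y) e) x e =
        c ^ 2 * fderiv ℝ (fun y => fderiv ℝ f y e) (c • x) e := by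
    have h := congrFun
      (fderiv_const_smul_field (𝕜 := ℝ) (f := fun y => fderiv ℝ f (c • y) e) c) x
    simp only [Pi.smul_def, smul_eq_mul] at h
    rw [h, fderiv_comp_smul (𝕜 := ℝ) (f := fun y => fderiv ℝ f y e)]
    simp only [smul_apply, smul_eq_mul]
    ring
  simp only [lap, fderiv_comp_smul, smul_apply, smul_eq_mul, hsecond, Finset.mul_sum]

/-- Smooth functions which, together with their gradient and Laplacian, are bounded by `C`: the
class to which the weak formulation extends once the solution is known to be integrable. -/
structure IsBoundedTestFunction (C : ℝ) (ψ : EuclideanSpace ℝ (Fin d) → ℝ) : Prop where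
  contDiff : ContDiff ℝ (⊤ : ℕ∞) ψ
  abs_le : ∀ x, |ψ x| ≤ C
  norm_fderiv_le : ∀ x, ‖fderiv ℝ ψ x‖ ≤ C
  abs_lap_le : ∀ x, |lap ψ x| ≤ C

namespace IsBoundedTestFunction

variable {C C₁ C₂ : ℝ} {ψ ψ₁ ψ₂ : EuclideanSpace ℝ (Fin d) → ℝ}

lemma nonneg (hψ : IsBoundedTestFunction C ψ) : 0 ≤ C :=
  (abs_nonneg _).trans (hψ.abs_le 0)

lemma abs_fderiv_apply_le (hψ : IsBoundedTestFunction C ψ) (x v : EuclideanSpace ℝ (Fin d)) :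
    |fderiv ℝ ψ x v| ≤ C * ‖v‖ :=
  (fderiv ℝ ψ x).le_of_opNorm_le (hψ.norm_fderiv_le x) v

lemma exists_of_hasCompactSupport (hψ : ContDiff ℝ (⊤ : ℕ∞) ψ) (hc : HasCompactSupport ψ) :
    ∃ C, IsBoundedTestFunction C ψ := by
  obtain ⟨C₀, h₀⟩ := hc.exists_bound_of_continuous hψ.continuous
  obtain ⟨C₁, h₁⟩ :=
    (hc.fderiv (𝕜 := ℝ)).exists_bound_of_continuous (hψ.continuous_fderiv (by simp))
  obtain ⟨C₂, h₂⟩ := (hasCompactSupport_lap hc).exists_bound_of_continuous (continuous_lap hψ)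
  exact ⟨max C₀ (max C₁ C₂), hψ, fun x => (h₀ x).trans (le_max_left _ _),
    fun x => (h₁ x).trans ((le_max_left _ _).trans (le_max_right _ _)),
    fun x => (h₂ x).trans ((le_max_right _ _).trans (le_max_right _ _))⟩

lemma comp_smul (hψ : IsBoundedTestFunction C ψ) {c : ℝ} (hc : |c| ≤ 1) :
    IsBoundedTestFunction C fun x => ψ (c • x) where
  contDiff := hψ.contDiff.comp (contDiff_const_smul c)
  abs_le x := hψ.abs_le _
  norm_fderiv_le x := by
    rw [fderiv_comp_smul, norm_smul, Real.norm_eq_abs]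
    exact (mul_le_of_le_one_left (norm_nonneg _) hc).trans (hψ.norm_fderiv_le _)
  abs_lap_le x := by
    rw [lap_comp_smul, abs_mul, abs_pow]
    exact (mul_le_of_le_one_left (abs_nonneg _) (pow_le_one₀ (abs_nonneg _) hc)).trans
      (hψ.abs_lap_le _)

lemma norm_fderiv_mul_le (h₁ : IsBoundedTestFunction C₁ ψ₁) (h₂ : IsBoundedTestFunction C₂ ψ₂)
    (x : EuclideanSpace ℝ (Fin d)) :
    ‖fderiv ℝ (fun y => ψ₁ y * ψ₂ y) x‖ ≤ 2 * (C₁ * C₂) := by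
  rw [fderiv_fun_mul (h₁.contDiff.differentiable (by simp) x)
    (h₂.contDiff.differentiable (by simp) x)]
  calc ‖ψ₁ x • fderiv ℝ ψ₂ x + ψ₂ x • fderiv ℝ ψ₁ x‖
      ≤ |ψ₁ x| * ‖fderiv ℝ ψ₂ x‖ + |ψ₂ x| * ‖fderiv ℝ ψ₁ x‖ := by
        simpa only [norm_smul, Real.norm_eq_abs] using
          norm_add_le (ψ₁ x • fderiv ℝ ψ₂ x) (ψ₂ x • fderiv ℝ ψ₁ x)
    _ ≤ C₁ * C₂ + C₂ * C₁ := add_le_add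
        (mul_le_mul (h₁.abs_le x) (h₂.norm_fderiv_le x) (norm_nonneg _) h₁.nonneg)
        (mul_le_mul (h₂.abs_le x) (h₁.norm_fderiv_le x) (norm_nonneg _) h₂.nonneg)
    _ = 2 * (C₁ * C₂) := by ring

lemma abs_lap_mul_le (h₁ : IsBoundedTestFunction C₁ ψ₁) (h₂ : IsBoundedTestFunction C₂ ψ₂)
    (x : EuclideanSpace ℝ (Fin d)) :
    |lap (fun y => ψ₁ y * ψ₂ y) x| ≤ (2 + 2 * d) * (C₁ * C₂) := by
  have cross (i : Fin d) : |fderiv ℝ ψ₁ x (EuclideanSpace.single i 1) *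
      fderiv ℝ ψ₂ x (EuclideanSpace.single i 1)| ≤ C₁ * C₂ := by
    rw [abs_mul]
    exact mul_le_mul (by simpa using h₁.abs_fderiv_apply_le x (EuclideanSpace.single i 1))
      (by simpa using h₂.abs_fderiv_apply_le x (EuclideanSpace.single i 1))
      (abs_nonneg _) h₁.nonneg
  have sum_le : |∑ i, fderiv ℝ ψ₁ x (EuclideanSpace.single i 1) *
      fderiv ℝ ψ₂ x (EuclideanSpace.single i 1)| ≤ d * (C₁ * C₂) :=
    (Finset.abs_sum_le_sum_abs _ _).trans
      ((Finset.sum_le_card_nsmul _ _ _ fun i _ => cross i).trans (by simp))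
  rw [lap_mul h₁.contDiff h₂.contDiff]
  calc _ ≤ |ψ₁ x| * |lap ψ₂ x| + |ψ₂ x| * |lap ψ₁ x| + 2 * |∑ i,
        fderiv ℝ ψ₁ x (EuclideanSpace.single i 1) * fderiv ℝ ψ₂ x (EuclideanSpace.single i 1)| := by
        simpa only [abs_mul, abs_two] using abs_add_three (ψ₁ x * lap ψ₂ x) (ψ₂ x * lap ψ₁ x)
          (2 * ∑ i, fderiv ℝ ψ₁ x (EuclideanSpace.single i 1) *
            fderiv ℝ ψ₂ x (EuclideanSpace.single i 1))
    _ ≤ C₁ * C₂ + C₂ * C₁ + 2 * (d * (C₁ * C₂)) := by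
        gcongr
        exacts [h₁.nonneg, h₁.abs_le x, h₂.abs_lap_le x, h₂.nonneg, h₂.abs_le x, h₁.abs_lap_le x]
    _ = (2 + 2 * d) * (C₁ * C₂) := by ring

lemma mul (h₁ : IsBoundedTestFunction C₁ ψ₁) (h₂ : IsBoundedTestFunction C₂ ψ₂) :
    IsBoundedTestFunction ((2 + 2 * d) * (C₁ * C₂)) fun x => ψ₁ x * ψ₂ x := by
  have hC : 0 ≤ C₁ * C₂ := mul_nonneg h₁.nonneg h₂.nonneg
  have hd : (0 : ℝ) ≤ d * (C₁ * C₂) := by positivity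
  refine ⟨h₁.contDiff.mul h₂.contDiff, fun x => ?_, fun x => ?_, h₁.abs_lap_mul_le h₂⟩
  · rw [abs_mul]
    linarith [mul_le_mul (h₁.abs_le x) (h₂.abs_le x) (abs_nonneg _) h₁.nonneg]
  · linarith [h₁.norm_fderiv_mul_le h₂ x]

lemma exists_seq_hasCompactSupport (hψ : IsBoundedTestFunction C ψ) :
    ∃ (ψn : ℕ → EuclideanSpace ℝ (Fin d) → ℝ) (K : ℝ),
      (∀ n, IsBoundedTestFunction K (ψn n)) ∧ (∀ n, HasCompactSupport (ψn n)) ∧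
      ∀ x, ∀ᶠ n in atTop, ψn n =ᶠ[nhds x] ψ := by
  let χ : ContDiffBump (0 : EuclideanSpace ℝ (Fin d)) := ⟨1, 2, by norm_num, by norm_num⟩
  let c (n : ℕ) : ℝ := ((n : ℝ) + 1)⁻¹
  have c_pos (n : ℕ) : 0 < c n := by positivity
  have c_le (n : ℕ) : |c n| ≤ 1 := by
    rw [abs_of_pos (c_pos n)]
    exact inv_le_one_of_one_le₀ (by linarith [(n.cast_nonneg : (0 : ℝ) ≤ n)])
  obtain ⟨Cχ, hχ⟩ := exists_of_hasCompactSupport χ.contDiff χ.hasCompactSupport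
  refine ⟨fun n x => χ (c n • x) * ψ x, _, fun n => (hχ.comp_smul (c_le n)).mul hψ, fun n => ?_,
    fun x => ?_⟩
  · exact (χ.hasCompactSupport.comp_homeomorph
      (Homeomorph.smulOfNeZero (c n) (c_pos n).ne')).mul_right
  · obtain ⟨N, hN⟩ := exists_nat_gt (‖x‖ + 1)
    filter_upwards [eventually_ge_atTop N] with n hn
    filter_upwards [Metric.ball_mem_nhds x one_pos] with y hy
    have hy_norm : ‖y‖ ≤ n + 1 := by
      have hNn : (N : ℝ) ≤ n := by exact_mod_cast hn
      rw [Metric.mem_ball, dist_eq_norm] at hy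
      linarith [norm_le_norm_add_norm_sub' y x]
    have hχ_one : χ (c n • y) = 1 := by
      refine χ.one_of_mem_closedBall ?_
      rw [mem_closedBall_zero_iff, norm_smul, Real.norm_eq_abs, abs_of_pos (c_pos n)]
      exact inv_mul_le_one_of_le₀ hy_norm (by positivity)
    rw [hχ_one, one_mul]

end IsBoundedTestFunction

/-- The real plane wave with frequency `k` and phase `a`; the phases `0` and `π / 2` give the real
and imaginary parts of the Fourier character. -/
def planeWave (a : ℝ) (k x : EuclideanSpace ℝ (Fin d)) : ℝ :=
  Real.cos (2 * Real.pi * inner ℝ x k + a)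

lemma contDiff_planeWave (a : ℝ) (k : EuclideanSpace ℝ (Fin d)) :
    ContDiff ℝ (⊤ : ℕ∞) (planeWave a k) :=
  Real.contDiff_cos.comp
    ((contDiff_const.mul (contDiff_id.inner ℝ contDiff_const)).add contDiff_const)

lemma abs_planeWave_le_one (a : ℝ) (k x : EuclideanSpace ℝ (Fin d)) : |planeWave a k x| ≤ 1 :=
  Real.abs_cos_le_one _

lemma planeWave_add_pi (a : ℝ) (k x : EuclideanSpace ℝ (Fin d)) :
    planeWave (a + Real.pi) k x = -planeWave a k x := by
  rw [planeWave, ← add_assoc, Real.cos_add_pi, planeWave]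

lemma fderiv_planeWave_apply (a : ℝ) (k x v : EuclideanSpace ℝ (Fin d)) :
    fderiv ℝ (planeWave a k) x v =
      2 * Real.pi * inner ℝ v k * planeWave (a + Real.pi / 2) k x := by
  have hphase : HasFDerivAt (fun x : EuclideanSpace ℝ (Fin d) => 2 * Real.pi * inner ℝ x k + a)
      ((2 * Real.pi) • innerSL ℝ k) x := by
    simpa only [Pi.smul_def, smul_eq_mul, innerSL_apply_apply, real_inner_comm k] using
      (((innerSL ℝ k).hasFDerivAt (x := x)).const_smul (2 * Real.pi)).add_const a
  rw [show fderiv ℝ (planeWave a k) x = _ from hphase.cos.fderiv, planeWave, ← add_assoc,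
    Real.cos_add_pi_div_two]
  simp only [smul_apply, innerSL_apply_apply, smul_eq_mul, real_inner_comm k]
  ring

lemma lap_planeWave (a : ℝ) (k x : EuclideanSpace ℝ (Fin d)) :
    lap (planeWave a k) x = -(2 * Real.pi * ‖k‖) ^ 2 * planeWave a k x := by
  have hsecond (i : Fin d) : fderiv ℝ (fun y => 2 * Real.pi *
      inner ℝ (EuclideanSpace.single i (1 : ℝ)) k * planeWave (a + Real.pi / 2) k y) x
      (EuclideanSpace.single i 1) = -(2 * Real.pi) ^ 2 * planeWave a k x * k i ^ 2 := by
    rw [fderiv_const_mul ((contDiff_planeWave _ k).differentiable (by simp) x), smul_apply,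
      fderiv_planeWave_apply, add_assoc, add_halves, planeWave_add_pi]
    simp only [EuclideanSpace.inner_single_left, map_one, one_mul, smul_eq_mul]
    ring
  simp only [lap, fderiv_planeWave_apply, hsecond]
  rw [← Finset.mul_sum, ← EuclideanSpace.real_norm_sq_eq]
  ring

lemma isBoundedTestFunction_planeWave (a : ℝ) (k : EuclideanSpace ℝ (Fin d)) :
    IsBoundedTestFunction (1 + (2 * Real.pi * ‖k‖) ^ 2) (planeWave a k) where
  contDiff := contDiff_planeWave a k
  abs_le x := (abs_planeWave_le_one a k x).trans (by linarith [sq_nonneg (2 * Real.pi * ‖k‖)])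
  norm_fderiv_le x := by
    have hκ : 2 * Real.pi * ‖k‖ ≤ 1 + (2 * Real.pi * ‖k‖) ^ 2 := by
      nlinarith [sq_nonneg (2 * Real.pi * ‖k‖ - 1)]
    refine ContinuousLinearMap.opNorm_le_bound _ (by positivity) fun v => ?_
    rw [fderiv_planeWave_apply, Real.norm_eq_abs, abs_mul]
    calc |2 * Real.pi * inner ℝ v k| * |planeWave (a + Real.pi / 2) k x|
        ≤ |2 * Real.pi * inner ℝ v k| :=
          mul_le_of_le_one_right (abs_nonneg _) (abs_planeWave_le_one _ k x)
      _ ≤ 2 * Real.pi * (‖v‖ * ‖k‖) := by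
          rw [abs_mul, abs_of_pos Real.two_pi_pos]
          gcongr
          exact abs_real_inner_le_norm v k
      _ = 2 * Real.pi * ‖k‖ * ‖v‖ := by ring
      _ ≤ (1 + (2 * Real.pi * ‖k‖) ^ 2) * ‖v‖ := by gcongr
  abs_lap_le x := by
    rw [lap_planeWave, abs_mul, abs_neg, abs_of_nonneg (sq_nonneg (2 * Real.pi * ‖k‖))]
    linarith [mul_le_of_le_one_right (sq_nonneg (2 * Real.pi * ‖k‖)) (abs_planeWave_le_one a k x)]

end Laplacian

section WeakFormulation

variable {d : ℕ}

/-- The Kolmogorov operator `ψ ↦ Ψ Δψ + B · ∇ψ`, whose formal adjoint is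
`v ↦ Δ(Ψ v) - div(B v)`. -/
def kolmogorov (Ψ : EuclideanSpace ℝ (Fin d) → ℝ)
    (B : EuclideanSpace ℝ (Fin d) → EuclideanSpace ℝ (Fin d))
    (ψ : EuclideanSpace ℝ (Fin d) → ℝ) (x : EuclideanSpace ℝ (Fin d)) : ℝ :=
  Ψ x * lap ψ x + fderiv ℝ ψ x (B x)

/-- Jointly measurable coefficients, bounded by `M` and `C` at every point of space-time. -/
structure IsBoundedCoeff (M C : ℝ) (Ψ : ℝ → EuclideanSpace ℝ (Fin d) → ℝ)
    (B : ℝ → EuclideanSpace ℝ (Fin d) → EuclideanSpace ℝ (Fin d)) : Prop where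
  measurable_diffusion : Measurable (Function.uncurry Ψ)
  measurable_drift : Measurable (Function.uncurry B)
  abs_diffusion_le : ∀ t x, |Ψ t x| ≤ M
  norm_drift_le : ∀ t x, ‖B t x‖ ≤ C

/-- Jointly measurable curves in `L¹(ℝ^d)`, indexed by the whole time line, with `L¹` norm at most
`K`. -/
structure IsBoundedL1Curve (K : ℝ) (w : ℝ → EuclideanSpace ℝ (Fin d) → ℝ) : Prop where
  measurable : Measurable (Function.uncurry w)
  integrable : ∀ t, Integrable (w t)
  integral_abs_le : ∀ t, ∫ x, |w t x| ≤ K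

/-- Bounded `L¹` curves satisfying the Fokker–Planck equation in time-integrated form, tested
against compactly supported functions of space alone. -/
structure IsIntegratedSolution (T K : ℝ) (Ψ : ℝ → EuclideanSpace ℝ (Fin d) → ℝ)
    (B : ℝ → EuclideanSpace ℝ (Fin d) → EuclideanSpace ℝ (Fin d))
    (w : ℝ → EuclideanSpace ℝ (Fin d) → ℝ) : Prop extends IsBoundedL1Curve K w where
  integral_mul_sub : ∀ ψ, IsTestFunction univ ψ → ∀ t ∈ Icc 0 T,
    (∫ x, w t x * ψ x) - ∫ x, w 0 x * ψ x =
      ∫ s in 0..t, ∫ x, w s x * kolmogorov (Ψ s) (B s) ψ x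

variable {T K K₁ K₂ M C A : ℝ} {Ψ : ℝ → EuclideanSpace ℝ (Fin d) → ℝ}
  {B : ℝ → EuclideanSpace ℝ (Fin d) → EuclideanSpace ℝ (Fin d)}
  {w w₁ w₂ : ℝ → EuclideanSpace ℝ (Fin d) → ℝ} {ψ : EuclideanSpace ℝ (Fin d) → ℝ}

namespace IsBoundedCoeff

lemma measurable_kolmogorov (hc : IsBoundedCoeff M C Ψ B) (hψ : ContDiff ℝ (⊤ : ℕ∞) ψ) :
    Measurable fun p : ℝ × EuclideanSpace ℝ (Fin d) => kolmogorov (Ψ p.1) (B p.1) ψ p.2 := by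
  have hfderiv : Measurable fun p : ℝ × EuclideanSpace ℝ (Fin d) =>
      fderiv ℝ ψ p.2 (B p.1 p.2) :=
    (isBoundedBilinearMap_apply.continuous.comp_stronglyMeasurable
      (((hψ.continuous_fderiv (by simp)).comp continuous_snd).stronglyMeasurable.prodMk
        hc.measurable_drift.stronglyMeasurable)).measurable
  exact (hc.measurable_diffusion.mul ((continuous_lap hψ).measurable.comp measurable_snd)).add
    hfderiv

lemma abs_kolmogorov_le (hc : IsBoundedCoeff M C Ψ B) (hψ : IsBoundedTestFunction A ψ)
    (t : ℝ) (x : EuclideanSpace ℝ (Fin d)) :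
    |kolmogorov (Ψ t) (B t) ψ x| ≤ (M + C) * A := by
  have hΨ := hc.abs_diffusion_le t x
  calc |kolmogorov (Ψ t) (B t) ψ x|
      ≤ |Ψ t x| * |lap ψ x| + |fderiv ℝ ψ x (B t x)| :=
        (abs_add_le _ _).trans_eq (by rw [abs_mul])
    _ ≤ M * A + A * C := add_le_add
        (mul_le_mul hΨ (hψ.abs_lap_le x) (abs_nonneg _) ((abs_nonneg _).trans hΨ))
        ((hψ.abs_fderiv_apply_le x _).trans
          (mul_le_mul_of_nonneg_left (hc.norm_drift_le t x) hψ.nonneg))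
    _ = (M + C) * A := by ring

end IsBoundedCoeff

lemma kolmogorov_congr_of_eventuallyEq {Ψ : EuclideanSpace ℝ (Fin d) → ℝ}
    {B : EuclideanSpace ℝ (Fin d) → EuclideanSpace ℝ (Fin d)}
    {ψ₁ ψ₂ : EuclideanSpace ℝ (Fin d) → ℝ} {x : EuclideanSpace ℝ (Fin d)}
    (h : ψ₁ =ᶠ[nhds x] ψ₂) : kolmogorov Ψ B ψ₁ x = kolmogorov Ψ B ψ₂ x := by
  rw [kolmogorov, kolmogorov, lap_congr_of_eventuallyEq h, h.fderiv_eq]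

namespace IsBoundedL1Curve

lemma integrable_mul_of_abs_le (hw : IsBoundedL1Curve K w) {g : EuclideanSpace ℝ (Fin d) → ℝ}
    (hg : Measurable g) (hA : ∀ x, |g x| ≤ A) (t : ℝ) : Integrable fun x => w t x * g x :=
  (hw.integrable t).mul_bdd (c := A) hg.aestronglyMeasurable (Eventually.of_forall hA)

lemma abs_integral_mul_le (hw : IsBoundedL1Curve K w) {g : EuclideanSpace ℝ (Fin d) → ℝ}
    (hA : ∀ x, |g x| ≤ A) (t : ℝ) : |∫ x, w t x * g x| ≤ A * K := by
  have hA0 : 0 ≤ A := (abs_nonneg _).trans (hA 0)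
  calc |∫ x, w t x * g x| ≤ ∫ x, A * |w t x| := by
        rw [← Real.norm_eq_abs]
        refine norm_integral_le_of_norm_le ((hw.integrable t).abs.const_mul A)
          (Eventually.of_forall fun x => ?_)
        rw [norm_mul, mul_comm]
        exact mul_le_mul_of_nonneg_right (hA x) (norm_nonneg _)
    _ ≤ A * K := by
        rw [integral_const_mul]
        exact mul_le_mul_of_nonneg_left (hw.integral_abs_le t) hA0

lemma sub (h₁ : IsBoundedL1Curve K₁ w₁) (h₂ : IsBoundedL1Curve K₂ w₂) :
    IsBoundedL1Curve (K₁ + K₂) fun t x => w₁ t x - w₂ t x where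
  measurable := h₁.measurable.sub h₂.measurable
  integrable t := (h₁.integrable t).sub (h₂.integrable t)
  integral_abs_le t := by
    have hint₁ := (h₁.integrable t).abs
    have hint₂ := (h₂.integrable t).abs
    calc ∫ x, |w₁ t x - w₂ t x| ≤ ∫ x, |w₁ t x| + |w₂ t x| :=
          integral_mono ((h₁.integrable t).sub (h₂.integrable t)).abs (hint₁.add hint₂)
            fun x => abs_sub _ _
      _ = (∫ x, |w₁ t x|) + ∫ x, |w₂ t x| := integral_add hint₁ hint₂
      _ ≤ K₁ + K₂ := add_le_add (h₁.integral_abs_le t) (h₂.integral_abs_le t)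

lemma stronglyMeasurable_integral_mul_kolmogorov (hw : IsBoundedL1Curve K w)
    (hc : IsBoundedCoeff M C Ψ B) (hψ : ContDiff ℝ (⊤ : ℕ∞) ψ) :
    StronglyMeasurable fun t => ∫ x, w t x * kolmogorov (Ψ t) (B t) ψ x :=
  (hw.measurable.mul (hc.measurable_kolmogorov hψ)).stronglyMeasurable.integral_prod_right'

lemma integrable_mul_kolmogorov (hw : IsBoundedL1Curve K w) (hc : IsBoundedCoeff M C Ψ B)
    (hψ : IsBoundedTestFunction A ψ) (t : ℝ) :
    Integrable fun x => w t x * kolmogorov (Ψ t) (B t) ψ x :=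
  hw.integrable_mul_of_abs_le
    ((hc.measurable_kolmogorov hψ.contDiff).comp measurable_prodMk_left)
    (hc.abs_kolmogorov_le hψ t) t

lemma intervalIntegrable_integral_mul_kolmogorov (hw : IsBoundedL1Curve K w)
    (hc : IsBoundedCoeff M C Ψ B) (hψ : IsBoundedTestFunction A ψ) (a b : ℝ) :
    IntervalIntegrable (fun t => ∫ x, w t x * kolmogorov (Ψ t) (B t) ψ x) volume a b :=
  (intervalIntegrable_const (c := (M + C) * A * K)).mono_fun'
    (hw.stronglyMeasurable_integral_mul_kolmogorov hc hψ.contDiff).aestronglyMeasurable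
    (Eventually.of_forall fun t => hw.abs_integral_mul_le (hc.abs_kolmogorov_le hψ t) t)

lemma tendsto_integral_mul (hw : IsBoundedL1Curve K w)
    {gn : ℕ → EuclideanSpace ℝ (Fin d) → ℝ} {g : EuclideanSpace ℝ (Fin d) → ℝ}
    (hgn : ∀ n, Measurable (gn n)) (hA : ∀ n x, |gn n x| ≤ A)
    (hlim : ∀ x, ∀ᶠ n in atTop, gn n x = g x) (t : ℝ) :
    Tendsto (fun n => ∫ x, w t x * gn n x) atTop (nhds (∫ x, w t x * g x)) := by
  refine tendsto_integral_of_dominated_convergence (fun x => |w t x| * A)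
    (fun n => (hw.integrable_mul_of_abs_le (hgn n) (hA n) t).aestronglyMeasurable)
    ((hw.integrable t).abs.mul_const A) (fun n => Eventually.of_forall fun x => ?_)
    (Eventually.of_forall fun x => ?_)
  · rw [norm_mul]
    exact mul_le_mul_of_nonneg_left (hA n x) (abs_nonneg _)
  · exact tendsto_const_nhds.congr' ((hlim x).mono fun n hn => by simp only [hn])

end IsBoundedL1Curve

namespace IsIntegratedSolution

lemma integral_mul_sub_of_bounded (hw : IsIntegratedSolution T K Ψ B w)
    (hc : IsBoundedCoeff M C Ψ B) (hψ : IsBoundedTestFunction A ψ) {t : ℝ} (ht : t ∈ Icc 0 T) :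
    (∫ x, w t x * ψ x) - ∫ x, w 0 x * ψ x =
      ∫ s in 0..t, ∫ x, w s x * kolmogorov (Ψ s) (B s) ψ x := by
  obtain ⟨ψn, L, hψn, hsupp, hlim⟩ := hψ.exists_seq_hasCompactSupport
  have tendsto_left (s : ℝ) :
      Tendsto (fun n => ∫ x, w s x * ψn n x) atTop (nhds (∫ x, w s x * ψ x)) :=
    hw.tendsto_integral_mul (fun n => (hψn n).contDiff.continuous.measurable)
      (fun n => (hψn n).abs_le) (fun x => (hlim x).mono fun n hn => hn.eq_of_nhds) s
  have tendsto_kolmogorov (s : ℝ) :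
      Tendsto (fun n => ∫ x, w s x * kolmogorov (Ψ s) (B s) (ψn n) x) atTop
        (nhds (∫ x, w s x * kolmogorov (Ψ s) (B s) ψ x)) :=
    hw.tendsto_integral_mul
      (fun n => (hc.measurable_kolmogorov (hψn n).contDiff).comp measurable_prodMk_left)
      (fun n => hc.abs_kolmogorov_le (hψn n) s)
      (fun x => (hlim x).mono fun n hn => kolmogorov_congr_of_eventuallyEq hn) s
  have tendsto_right :
      Tendsto (fun n => ∫ s in 0..t, ∫ x, w s x * kolmogorov (Ψ s) (B s) (ψn n) x) atTop
        (nhds (∫ s in 0..t, ∫ x, w s x * kolmogorov (Ψ s) (B s) ψ x)) :=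
    intervalIntegral.tendsto_integral_filter_of_dominated_convergence
      (fun _ => (M + C) * L * K)
      (Eventually.of_forall fun n =>
        (hw.stronglyMeasurable_integral_mul_kolmogorov hc (hψn n).contDiff).aestronglyMeasurable)
      (Eventually.of_forall fun n => Eventually.of_forall fun s _ =>
        hw.abs_integral_mul_le (hc.abs_kolmogorov_le (hψn n) s) s)
      intervalIntegrable_const (Eventually.of_forall fun s _ => tendsto_kolmogorov s)
  refine tendsto_nhds_unique ((tendsto_left t).sub (tendsto_left 0))
    (tendsto_right.congr fun n => ?_)
  exact (hw.integral_mul_sub _ ⟨(hψn n).contDiff, hsupp n, subset_univ _⟩ t ht).symm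

lemma sub (hc : IsBoundedCoeff M C Ψ B) (h₁ : IsIntegratedSolution T K₁ Ψ B w₁)
    (h₂ : IsIntegratedSolution T K₂ Ψ B w₂) :
    IsIntegratedSolution T (K₁ + K₂) Ψ B fun t x => w₁ t x - w₂ t x where
  toIsBoundedL1Curve := h₁.toIsBoundedL1Curve.sub h₂.toIsBoundedL1Curve
  integral_mul_sub ψ hψ t ht := by
    obtain ⟨A, hA⟩ :=
      IsBoundedTestFunction.exists_of_hasCompactSupport hψ.contDiff hψ.hasCompactSupport
    have split_test (s : ℝ) : ∫ x, (w₁ s x - w₂ s x) * ψ x =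
        (∫ x, w₁ s x * ψ x) - ∫ x, w₂ s x * ψ x := by
      simp only [sub_mul]
      exact integral_sub
        (h₁.integrable_mul_of_abs_le hψ.contDiff.continuous.measurable hA.abs_le s)
        (h₂.integrable_mul_of_abs_le hψ.contDiff.continuous.measurable hA.abs_le s)
    have split_kolmogorov (s : ℝ) : ∫ x, (w₁ s x - w₂ s x) * kolmogorov (Ψ s) (B s) ψ x =
        (∫ x, w₁ s x * kolmogorov (Ψ s) (B s) ψ x) -
          ∫ x, w₂ s x * kolmogorov (Ψ s) (B s) ψ x := by
      simp only [sub_mul]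
      exact integral_sub (h₁.integrable_mul_kolmogorov hc hA s)
        (h₂.integrable_mul_kolmogorov hc hA s)
    simp only [split_test, split_kolmogorov]
    rw [intervalIntegral.integral_sub
      (h₁.intervalIntegrable_integral_mul_kolmogorov hc hA 0 t)
      (h₂.intervalIntegrable_integral_mul_kolmogorov hc hA 0 t),
      ← h₁.integral_mul_sub ψ hψ t ht, ← h₂.integral_mul_sub ψ hψ t ht]
    ring

end IsIntegratedSolution

lemma isTestFunction_uncurry_mul {η : ℝ → ℝ} {U : Set ℝ} (hη : IsTestFunction U η)
    (hψ : IsTestFunction univ ψ) :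
    IsTestFunction (U ×ˢ univ) (Function.uncurry fun t x => η t * ψ x) := by
  have hsupp : tsupport (Function.uncurry fun t x => η t * ψ x) ⊆ tsupport η ×ˢ tsupport ψ := by
    refine closure_minimal ?_ ((isClosed_tsupport _).prod (isClosed_tsupport _))
    rintro ⟨t, x⟩ h
    simp only [Function.mem_support, Function.uncurry_apply_pair, mul_ne_zero_iff] at h
    exact ⟨subset_tsupport _ h.1, subset_tsupport _ h.2⟩
  exact ⟨(hη.contDiff.comp contDiff_fst).mul (hψ.contDiff.comp contDiff_snd),
    (hη.hasCompactSupport.isCompact.prod hψ.hasCompactSupport.isCompact).of_isClosed_subset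
      (isClosed_tsupport _) hsupp,
    hsupp.trans (prod_mono hη.tsupport_subset (subset_univ _))⟩

namespace IsLinDistSol

variable {Ψ' : ℝ → EuclideanSpace ℝ (Fin d) → ℝ}
  {B' : ℝ → EuclideanSpace ℝ (Fin d) → EuclideanSpace ℝ (Fin d)}
  {v W : ℝ → EuclideanSpace ℝ (Fin d) → ℝ} {v0 : EuclideanSpace ℝ (Fin d) → ℝ}

lemma congr_ae (hT : 0 ≤ T) (h : IsLinDistSol T Ψ B v0 v)
    (hcoeff : ∀ᵐ t ∂volume.restrict (Ioo 0 T), ∀ᵐ x, Ψ' t x = Ψ t x ∧ B' t x = B t x)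
    (hW : ∀ t ∈ Icc 0 T, W t =ᵐ[volume] v t) : IsLinDistSol T Ψ' B' v0 W := by
  have hpair (ψ : EuclideanSpace ℝ (Fin d) → ℝ) (t : ℝ) (ht : t ∈ Icc 0 T) :
      ∫ x, v t x * ψ x = ∫ x, W t x * ψ x :=
    integral_congr_ae ((hW t ht).mono fun x hx => by simp only [hx])
  refine ⟨fun t ht => (h.1 t ht).congr (hW t ht).symm, fun ψ hψ hbdd s hs => ?_,
    fun φ hφ hφc hφs => ?_, (hW 0 (left_mem_Icc.2 hT)).trans h.2.2.2⟩
  · rw [← hpair ψ s hs]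
    exact (h.2.1 ψ hψ hbdd s hs).congr' (eventually_mem_nhdsWithin.mono (hpair ψ))
  · refine Eq.trans (integral_congr_ae ?_) (h.2.2.1 φ hφ hφc hφs)
    filter_upwards [hcoeff, ae_restrict_mem measurableSet_Ioo] with t htc ht
    refine integral_congr_ae ?_
    filter_upwards [htc, hW t (Ioo_subset_Icc_self ht)] with x hx hWx
    rw [hx.1, hx.2, hWx]

lemma continuous_integral_projIcc_mul (hT : 0 ≤ T) (h : IsLinDistSol T Ψ B v0 v)
    (ψ : BoundedContinuousFunction (EuclideanSpace ℝ (Fin d)) ℝ) :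
    Continuous fun t => ∫ x, v (projIcc 0 T hT t) x * ψ x :=
  ContinuousOn.comp_continuous (s := Icc 0 T) (g := fun t => ∫ x, v t x * ψ x)
    (fun s hs => h.2.1 ψ ψ.continuous ⟨‖ψ‖, ψ.norm_coe_le_norm⟩ s hs)
    (continuous_subtype_val.comp continuous_projIcc) fun t => (projIcc 0 T hT t).2

lemma exists_isBoundedL1Curve (hT : 0 ≤ T) (h : IsLinDistSol T Ψ B v0 v) :
    ∃ K W, IsBoundedL1Curve K W ∧ ∀ t ∈ Icc 0 T, W t =ᵐ[volume] v t := by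
  have hint (t : ℝ) : Integrable (v (projIcc 0 T hT t)) := h.1 _ (projIcc 0 T hT t).2
  obtain ⟨W, hW, hWv⟩ :=
    exists_measurable_uncurry_ae_eq hint (h.continuous_integral_projIcc_mul hT)
  obtain ⟨K, hK⟩ := exists_integral_abs_le_of_weakly_bounded hint fun ψ => by
    obtain ⟨C, hC⟩ := isCompact_Icc.exists_bound_of_continuousOn (s := Icc 0 T)
      (h.continuous_integral_projIcc_mul hT ψ).continuousOn
    exact ⟨C, fun t => by
      simpa only [projIcc_val, Real.norm_eq_abs] using hC _ (projIcc 0 T hT t).2⟩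
  refine ⟨K, W, ⟨hW, fun t => (hint t).congr (hWv t).symm, fun t => ?_⟩, fun t ht => ?_⟩
  · refine le_of_eq_of_le (integral_congr_ae ?_) (hK t)
    filter_upwards [hWv t] with x hx
    rw [hx]
  · simpa only [projIcc_of_mem hT ht] using hWv t

lemma intervalIntegral_mul_deriv_add_eq_zero (hT : 0 ≤ T) (h : IsLinDistSol T Ψ B v0 v)
    (hv : IsBoundedL1Curve K v) (hc : IsBoundedCoeff M C Ψ B) {η : ℝ → ℝ}
    (hη : IsTestFunction (Ioo 0 T) η) (hψ : IsTestFunction univ ψ) :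
    ∫ t in 0..T, ((∫ x, v t x * ψ x) * deriv η t +
      (∫ x, v t x * kolmogorov (Ψ t) (B t) ψ x) * η t) = 0 := by
  obtain ⟨A, hA⟩ :=
    IsBoundedTestFunction.exists_of_hasCompactSupport hψ.contDiff hψ.hasCompactSupport
  have hφ := isTestFunction_uncurry_mul hη hψ
  rw [intervalIntegral.integral_of_le hT, integral_Ioc_eq_integral_Ioo]
  refine Eq.trans ?_ (h.2.2.1 (fun t x => η t * ψ x) hφ.contDiff hφ.hasCompactSupport
    fun p hp => (hφ.tsupport_subset hp).1)
  refine integral_congr_ae (Eventually.of_forall fun t => ?_)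
  have hint_test : Integrable fun x => v t x * ψ x :=
    hv.integrable_mul_of_abs_le hψ.contDiff.continuous.measurable hA.abs_le t
  simp only
  rw [← integral_mul_const, ← integral_mul_const, ← integral_add (hint_test.mul_const _)
    ((hv.integrable_mul_kolmogorov hc hA t).mul_const _)]
  refine integral_congr_ae (Eventually.of_forall fun x => ?_)
  simp only
  rw [deriv_mul_const (hη.contDiff.differentiable (by simp) t), lap_const_mul,
    fderiv_const_mul (hψ.contDiff.differentiable (by simp) x), kolmogorov]
  simp only [smul_apply, smul_eq_mul]
  ring

lemma isIntegratedSolution (hT : 0 < T) (h : IsLinDistSol T Ψ B v0 v)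
    (hv : IsBoundedL1Curve K v) (hc : IsBoundedCoeff M C Ψ B) :
    IsIntegratedSolution T K Ψ B v where
  toIsBoundedL1Curve := hv
  integral_mul_sub ψ hψ t ht := by
    obtain ⟨A, hA⟩ :=
      IsBoundedTestFunction.exists_of_hasCompactSupport hψ.contDiff hψ.hasCompactSupport
    have hcont : ContinuousOn (fun t => ∫ x, v t x * ψ x) (Icc 0 T) :=
      h.2.1 ψ hψ.contDiff.continuous ⟨A, hA.abs_le⟩
    exact sub_eq_integral_of_weak_deriv hT hcont
      (hv.intervalIntegrable_integral_mul_kolmogorov hc hA 0 T)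
      (fun η hη => h.intervalIntegral_mul_deriv_add_eq_zero hT.le hv hc hη hψ) ht

lemma exists_isIntegratedSolution (hT : 0 < T) (h : IsLinDistSol T Ψ B v0 v)
    (hc : IsBoundedCoeff M C Ψ' B')
    (hcoeff : ∀ᵐ t ∂volume.restrict (Ioo 0 T), ∀ᵐ x, Ψ' t x = Ψ t x ∧ B' t x = B t x) :
    ∃ K W, IsIntegratedSolution T K Ψ' B' W ∧ ∀ t ∈ Icc 0 T, W t =ᵐ[volume] v t := by
  obtain ⟨K, W, hW, hWv⟩ := h.exists_isBoundedL1Curve hT.le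
  exact ⟨K, W, (h.congr_ae hT.le hcoeff hWv).isIntegratedSolution hT hW hc, hWv⟩

end IsLinDistSol

end WeakFormulation

section FourierFlux

variable {d : ℕ} {f Ψ : EuclideanSpace ℝ (Fin d) → ℝ}
  {B : EuclideanSpace ℝ (Fin d) → EuclideanSpace ℝ (Fin d)}

/-- The Fourier transform of `Δ(Ψ f) - div(B f)`, expressed through those of `Ψ f` and of the
components of `B f`. -/
def fourierFlux (Ψ : EuclideanSpace ℝ (Fin d) → ℝ)
    (B : EuclideanSpace ℝ (Fin d) → EuclideanSpace ℝ (Fin d))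
    (f : EuclideanSpace ℝ (Fin d) → ℝ) (k : EuclideanSpace ℝ (Fin d)) : ℂ :=
  -((2 * Real.pi * ‖k‖) ^ 2 : ℝ) * realFourier (fun x => f x * Ψ x) k -
    Complex.I * ∑ j, (2 * Real.pi * k j : ℝ) * realFourier (fun x => f x * B x j) k

lemma integrable_mul_planeWave (hf : Integrable f) (a : ℝ) (k : EuclideanSpace ℝ (Fin d)) :
    Integrable fun x => f x * planeWave a k x :=
  hf.mul_bdd (c := 1) (contDiff_planeWave a k).continuous.aestronglyMeasurable
    (Eventually.of_forall fun x => abs_planeWave_le_one a k x)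

lemma integral_mul_planeWave (hf : Integrable f) (a : ℝ) (k : EuclideanSpace ℝ (Fin d)) :
    ∫ x, f x * planeWave a k x = (Complex.exp (-(a * Complex.I)) * realFourier f k).re := by
  have hpoint (x : EuclideanSpace ℝ (Fin d)) :
      (Complex.exp (-(a * Complex.I)) *
        (Complex.exp (↑(-(2 * Real.pi * inner ℝ x k)) * Complex.I) * f x)).re =
          f x * planeWave a k x := by
    have hexp : Complex.exp (-(a * Complex.I)) *
        Complex.exp (↑(-(2 * Real.pi * inner ℝ x k)) * Complex.I) =
          Complex.exp (↑(-(2 * Real.pi * inner ℝ x k + a)) * Complex.I) := by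
      rw [← Complex.exp_add]
      push_cast
      ring_nf
    rw [← mul_assoc, hexp, Complex.re_mul_ofReal, Complex.exp_ofReal_mul_I_re, Real.cos_neg,
      planeWave, mul_comm]
  have hint : Integrable fun x => Complex.exp (-(a * Complex.I)) *
      (Complex.exp (↑(-(2 * Real.pi * inner ℝ x k)) * Complex.I) * f x) := by
    refine (hf.ofReal.bdd_mul (c := 1) (Continuous.aestronglyMeasurable (by fun_prop))
      (Eventually.of_forall fun x => ?_)).const_mul _
    rw [Complex.norm_exp_ofReal_mul_I]
  rw [realFourier_eq_integral, ← integral_const_mul]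
  simp only [← hpoint]
  exact integral_re hint

lemma mul_kolmogorov_planeWave (a : ℝ) (k x : EuclideanSpace ℝ (Fin d)) :
    f x * kolmogorov Ψ B (planeWave a k) x =
      -(2 * Real.pi * ‖k‖) ^ 2 * (f x * Ψ x * planeWave a k x) +
        ∑ j, 2 * Real.pi * k j * (f x * B x j * planeWave (a + Real.pi / 2) k x) := by
  have hinner : inner ℝ (B x) k = ∑ j, k j * B x j := by
    simp only [PiLp.inner_apply, RCLike.inner_apply, conj_trivial]
  rw [kolmogorov, lap_planeWave, fderiv_planeWave_apply, hinner, mul_add]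
  congr 1
  · ring
  · rw [Finset.mul_sum, Finset.sum_mul, Finset.mul_sum]
    exact Finset.sum_congr rfl fun j _ => by ring

lemma integral_mul_kolmogorov_planeWave (hΨ : Integrable fun x => f x * Ψ x)
    (hB : ∀ j, Integrable fun x => f x * B x j) (a : ℝ) (k : EuclideanSpace ℝ (Fin d)) :
    ∫ x, f x * kolmogorov Ψ B (planeWave a k) x =
      (Complex.exp (-(a * Complex.I)) * fourierFlux Ψ B f k).re := by
  have hquarter : Complex.exp (-(↑(a + Real.pi / 2) * Complex.I)) =
      Complex.exp (-(a * Complex.I)) * -Complex.I := by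
    have hsplit : -(↑(a + Real.pi / 2) * Complex.I) =
        -(a * Complex.I) + -(Real.pi / 2 * Complex.I) := by
      push_cast
      ring
    rw [hsplit, Complex.exp_add, Complex.exp_neg (_ / 2 * _), Complex.exp_pi_div_two_mul_I,
      Complex.inv_I]
  have hdrift (j : Fin d) (_ : j ∈ Finset.univ) : Integrable fun x =>
      2 * Real.pi * k j * (f x * B x j * planeWave (a + Real.pi / 2) k x) :=
    (integrable_mul_planeWave (hB j) _ k).const_mul _
  simp only [mul_kolmogorov_planeWave]
  rw [integral_add ((integrable_mul_planeWave hΨ a k).const_mul _)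
    (integrable_finsetSum _ hdrift), integral_finsetSum _ hdrift, integral_const_mul,
    integral_mul_planeWave hΨ]
  simp only [integral_const_mul, integral_mul_planeWave (hB _), hquarter, ← Complex.re_ofReal_mul]
  rw [← Complex.re_sum, ← Complex.add_re, fourierFlux, mul_sub, Finset.mul_sum, Finset.mul_sum,
    sub_eq_add_neg, ← Finset.sum_neg_distrib]
  congr 2
  · push_cast
    ring
  · exact Finset.sum_congr rfl fun j _ => by ring

end FourierFlux

section EnergyRate

variable {d : ℕ}

/-- The symbol `(1 + 4π²‖k‖²)⁻¹` of `(1 - Δ)⁻¹`, the weight of the `H⁻¹` norm. -/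
def sobolevWeight (k : EuclideanSpace ℝ (Fin d)) : ℝ :=
  (1 + (2 * Real.pi * ‖k‖) ^ 2)⁻¹

/-- The density `(1 + 4π²‖k‖²)⁻¹ ‖f̂(k)‖²` of the squared `H⁻¹` norm of `f`. -/
def energyDensity (f : EuclideanSpace ℝ (Fin d) → ℝ) (k : EuclideanSpace ℝ (Fin d)) : ℝ :=
  sobolevWeight k * ‖realFourier f k‖ ^ 2

/-- The time derivative of `energyDensity` along `∂ₜf = Δ(Ψ f) - div(B f)`. -/
def energyRate (Ψ : EuclideanSpace ℝ (Fin d) → ℝ)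
    (B : EuclideanSpace ℝ (Fin d) → EuclideanSpace ℝ (Fin d))
    (f : EuclideanSpace ℝ (Fin d) → ℝ) (k : EuclideanSpace ℝ (Fin d)) : ℝ :=
  sobolevWeight k * (2 * inner ℝ (realFourier f k) (fourierFlux Ψ B f k))

/-- The squared norm, at frequency `k`, of the Fourier transform of the vector `(Ψ f, B f)`. -/
def fluxNormSq (Ψ : EuclideanSpace ℝ (Fin d) → ℝ)
    (B : EuclideanSpace ℝ (Fin d) → EuclideanSpace ℝ (Fin d))
    (f : EuclideanSpace ℝ (Fin d) → ℝ) (k : EuclideanSpace ℝ (Fin d)) : ℝ :=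
  ‖realFourier (fun x => f x * Ψ x) k‖ ^ 2 + ∑ j, ‖realFourier (fun x => f x * B x j) k‖ ^ 2

/-- What remains of `fourierFlux` once `-(1 + 4π²‖k‖²)` times the Fourier transform of `Ψ f` is
taken out: it is of first order in `k`. -/
def lowerOrderFlux (Ψ : EuclideanSpace ℝ (Fin d) → ℝ)
    (B : EuclideanSpace ℝ (Fin d) → EuclideanSpace ℝ (Fin d))
    (f : EuclideanSpace ℝ (Fin d) → ℝ) (k : EuclideanSpace ℝ (Fin d)) : ℂ :=
  realFourier (fun x => f x * Ψ x) k -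
    Complex.I * ∑ j, (2 * Real.pi * k j : ℝ) * realFourier (fun x => f x * B x j) k

variable (f Ψ : EuclideanSpace ℝ (Fin d) → ℝ)
  (B : EuclideanSpace ℝ (Fin d) → EuclideanSpace ℝ (Fin d)) (k : EuclideanSpace ℝ (Fin d))

lemma sobolevWeight_pos : 0 < sobolevWeight k := by
  unfold sobolevWeight
  positivity

lemma sobolevWeight_le_one : sobolevWeight k ≤ 1 :=
  inv_le_one_of_one_le₀ (le_add_of_nonneg_right (sq_nonneg _))

lemma sobolevWeight_mul_eq_one : sobolevWeight k * (1 + (2 * Real.pi * ‖k‖) ^ 2) = 1 :=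
  inv_mul_cancel₀ (by positivity)

lemma continuous_sobolevWeight :
    Continuous (sobolevWeight : EuclideanSpace ℝ (Fin d) → ℝ) :=
  Continuous.inv₀ (by fun_prop) fun _ => by positivity

lemma energyDensity_nonneg : 0 ≤ energyDensity f k :=
  mul_nonneg (sobolevWeight_pos k).le (sq_nonneg _)

lemma energyDensity_le : energyDensity f k ≤ ‖realFourier f k‖ ^ 2 :=
  mul_le_of_le_one_left (sq_nonneg _) (sobolevWeight_le_one k)

lemma norm_sub_I_mul_sum_sq_le {ι : Type*} [Fintype ι] (z : ℂ) (c : ι → ℝ) (q : ι → ℂ) :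
    ‖z - Complex.I * ∑ j, c j * q j‖ ^ 2 ≤ (1 + ∑ j, c j ^ 2) * (‖z‖ ^ 2 + ∑ j, ‖q j‖ ^ 2) := by
  have htriangle : ‖z - Complex.I * ∑ j, c j * q j‖ ≤ ‖z‖ + ∑ j, |c j| * ‖q j‖ := by
    refine (norm_sub_le _ _).trans (add_le_add_right ?_ _)
    rw [norm_mul, Complex.norm_I, one_mul]
    refine (norm_sum_le _ _).trans_eq (Finset.sum_congr rfl fun j _ => ?_)
    rw [norm_mul, Complex.norm_real, Real.norm_eq_abs]
  -- Cauchy–Schwarz for the vectors `(1, |c|)` and `(‖z‖, ‖q‖)`.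
  have hcauchy := Finset.sum_mul_sq_le_sq_mul_sq Finset.univ
    (fun o : Option ι => o.elim 1 fun j => |c j|) (fun o => o.elim ‖z‖ fun j => ‖q j‖)
  simp only [Fintype.sum_option, Option.elim_none, Option.elim_some, one_mul, one_pow, sq_abs]
    at hcauchy
  exact (pow_le_pow_left₀ (norm_nonneg _) htriangle 2).trans hcauchy

lemma sobolevWeight_mul_norm_lowerOrderFlux_sq_le :
    sobolevWeight k * ‖lowerOrderFlux Ψ B f k‖ ^ 2 ≤ fluxNormSq Ψ B f k := by
  have hsum : ∑ j, (2 * Real.pi * k j) ^ 2 = (2 * Real.pi * ‖k‖) ^ 2 := by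
    simp only [mul_pow, EuclideanSpace.real_norm_sq_eq, Finset.mul_sum]
  calc sobolevWeight k * ‖lowerOrderFlux Ψ B f k‖ ^ 2
      ≤ sobolevWeight k * ((1 + (2 * Real.pi * ‖k‖) ^ 2) * fluxNormSq Ψ B f k) := by
        refine mul_le_mul_of_nonneg_left ?_ (sobolevWeight_pos k).le
        rw [← hsum]
        exact norm_sub_I_mul_sum_sq_le _ _ _
    _ = fluxNormSq Ψ B f k := by rw [← mul_assoc, sobolevWeight_mul_eq_one, one_mul]

lemma energyRate_eq :
    energyRate Ψ B f k =
      -2 * inner ℝ (realFourier f k) (realFourier (fun x => f x * Ψ x) k) +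
        sobolevWeight k * (2 * inner ℝ (realFourier f k) (lowerOrderFlux Ψ B f k)) := by
  have hflux : fourierFlux Ψ B f k = lowerOrderFlux Ψ B f k -
      (1 + (2 * Real.pi * ‖k‖) ^ 2) • realFourier (fun x => f x * Ψ x) k := by
    rw [fourierFlux, lowerOrderFlux, Complex.real_smul]
    push_cast
    ring
  rw [energyRate, hflux, inner_sub_right, real_inner_smul_right]
  linear_combination (-2 * inner ℝ (realFourier f k) (realFourier (fun x => f x * Ψ x) k)) *
    sobolevWeight_mul_eq_one k

lemma two_mul_inner_le {V : Type*} [NormedAddCommGroup V] [InnerProductSpace ℝ V] (x y : V)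
    {ε : ℝ} (hε : 0 < ε) : 2 * inner ℝ x y ≤ ε⁻¹ * ‖x‖ ^ 2 + ε * ‖y‖ ^ 2 := by
  have hsq : 0 ≤ ε⁻¹ * ‖x - ε • y‖ ^ 2 := by positivity
  rw [norm_sub_sq_real, real_inner_smul_right, norm_smul, Real.norm_of_nonneg hε.le] at hsq
  have hexpand : ε⁻¹ * (‖x‖ ^ 2 - 2 * (ε * inner ℝ x y) + (ε * ‖y‖) ^ 2) =
      ε⁻¹ * ‖x‖ ^ 2 + ε * ‖y‖ ^ 2 - 2 * inner ℝ x y := by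
    field_simp
    ring
  linarith

lemma energyRate_le {ε : ℝ} (hε : 0 < ε) :
    energyRate Ψ B f k ≤
      -2 * inner ℝ (realFourier f k) (realFourier (fun x => f x * Ψ x) k) +
        ε⁻¹ * energyDensity f k + ε * fluxNormSq Ψ B f k := by
  have hyoung := mul_le_mul_of_nonneg_left
    (two_mul_inner_le (realFourier f k) (lowerOrderFlux Ψ B f k) hε) (sobolevWeight_pos k).le
  have hlower := mul_le_mul_of_nonneg_left
    (sobolevWeight_mul_norm_lowerOrderFlux_sq_le f Ψ B k) hε.le
  rw [energyRate_eq, energyDensity]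
  linarith

lemma abs_energyRate_le :
    |energyRate Ψ B f k| ≤ 2 * ‖realFourier f k‖ ^ 2 + 2 * fluxNormSq Ψ B f k := by
  have habs {z y : ℂ} : |2 * inner ℝ z y| ≤ ‖z‖ ^ 2 + ‖y‖ ^ 2 := by
    have hyoung := two_mul_inner_le z y one_pos
    have hyoung_neg := two_mul_inner_le z (-y) one_pos
    rw [inner_neg_right, norm_neg] at hyoung_neg
    rw [abs_le]
    constructor <;> linarith
  have hdiffusion : ‖realFourier (fun x => f x * Ψ x) k‖ ^ 2 ≤ fluxNormSq Ψ B f k :=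
    le_add_of_nonneg_right (Finset.sum_nonneg fun j _ => sq_nonneg _)
  rw [energyRate_eq, neg_mul, neg_add_eq_sub]
  calc _ ≤ _ := abs_sub _ _
    _ ≤ sobolevWeight k * (‖realFourier f k‖ ^ 2 + ‖lowerOrderFlux Ψ B f k‖ ^ 2) +
        (‖realFourier f k‖ ^ 2 + ‖realFourier (fun x => f x * Ψ x) k‖ ^ 2) := by
      rw [abs_mul, abs_of_pos (sobolevWeight_pos k)]
      exact add_le_add (mul_le_mul_of_nonneg_left habs (sobolevWeight_pos k).le) habs
    _ ≤ 2 * ‖realFourier f k‖ ^ 2 + 2 * fluxNormSq Ψ B f k := by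
      linarith [energyDensity_le f k, energyDensity.eq_1 f k,
        sobolevWeight_mul_norm_lowerOrderFlux_sq_le f Ψ B k]

end EnergyRate

section EnergyEstimate

variable {d : ℕ} {M C γ ε : ℝ}

lemma continuous_energyRate {f Ψ : EuclideanSpace ℝ (Fin d) → ℝ}
    {B : EuclideanSpace ℝ (Fin d) → EuclideanSpace ℝ (Fin d)} (hf : Integrable f)
    (hΨ : Integrable fun x => f x * Ψ x) (hB : ∀ j, Integrable fun x => f x * B x j) :
    Continuous (energyRate Ψ B f) := by
  have hf' := continuous_realFourier hf
  have hΨ' := continuous_realFourier hΨ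
  have hB' := fun j => continuous_realFourier (hB j)
  have hflux : Continuous (fourierFlux Ψ B f) := by
    unfold fourierFlux
    fun_prop
  exact continuous_sobolevWeight.mul (continuous_const.mul (hf'.inner hflux))

lemma integrable_energyDensity {f : EuclideanSpace ℝ (Fin d) → ℝ} (hf₁ : Integrable f)
    (hf₂ : MemLp f 2) : Integrable (energyDensity f) := by
  refine (integrable_norm_sq_realFourier hf₁ hf₂).mono' (continuous_sobolevWeight.mul
    ((continuous_realFourier hf₁).norm.pow 2)).aestronglyMeasurable
    (Eventually.of_forall fun k => ?_)
  rw [Real.norm_of_nonneg (energyDensity_nonneg f k)]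
  exact energyDensity_le f k

namespace IsBoundedCoeff

variable {Ψ : ℝ → EuclideanSpace ℝ (Fin d) → ℝ}
  {B : ℝ → EuclideanSpace ℝ (Fin d) → EuclideanSpace ℝ (Fin d)}
  {f : EuclideanSpace ℝ (Fin d) → ℝ}

lemma abs_drift_apply_le (hc : IsBoundedCoeff M C Ψ B) (j : Fin d) (t : ℝ)
    (x : EuclideanSpace ℝ (Fin d)) : |B t x j| ≤ C :=
  (PiLp.norm_apply_le (B t x) j).trans (hc.norm_drift_le t x)

lemma measurable_drift_apply (hc : IsBoundedCoeff M C Ψ B) (j : Fin d) :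
    Measurable (Function.uncurry fun t x => B t x j) :=
  (EuclideanSpace.proj (𝕜 := ℝ) j).continuous.measurable.comp hc.measurable_drift

lemma memLp_mul_diffusion (hc : IsBoundedCoeff M C Ψ B) (t : ℝ) {p : ENNReal}
    (hf : MemLp f p) : MemLp (fun x => f x * Ψ t x) p := by
  refine hf.of_le_mul (c := M) (hf.1.mul
    hc.measurable_diffusion.of_uncurry_left.aestronglyMeasurable)
    (Eventually.of_forall fun x => ?_)
  rw [norm_mul, mul_comm]
  exact mul_le_mul_of_nonneg_right (hc.abs_diffusion_le t x) (norm_nonneg _)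

lemma memLp_mul_drift (hc : IsBoundedCoeff M C Ψ B) (t : ℝ) (j : Fin d) {p : ENNReal}
    (hf : MemLp f p) : MemLp (fun x => f x * B t x j) p := by
  refine hf.of_le_mul (c := C) (hf.1.mul
    (hc.measurable_drift_apply j).of_uncurry_left.aestronglyMeasurable)
    (Eventually.of_forall fun x => ?_)
  rw [norm_mul, mul_comm]
  exact mul_le_mul_of_nonneg_right (hc.abs_drift_apply_le j t x) (norm_nonneg _)

lemma integrable_mul_diffusion (hc : IsBoundedCoeff M C Ψ B) (t : ℝ) (hf : Integrable f) :
    Integrable fun x => f x * Ψ t x :=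
  memLp_one_iff_integrable.1 (hc.memLp_mul_diffusion t (memLp_one_iff_integrable.2 hf))

lemma integrable_mul_drift (hc : IsBoundedCoeff M C Ψ B) (t : ℝ) (j : Fin d)
    (hf : Integrable f) : Integrable fun x => f x * B t x j :=
  memLp_one_iff_integrable.1 (hc.memLp_mul_drift t j (memLp_one_iff_integrable.2 hf))

lemma integrable_fluxNormSq (hc : IsBoundedCoeff M C Ψ B) (t : ℝ) (hf₁ : Integrable f)
    (hf₂ : MemLp f 2) : Integrable (fluxNormSq (Ψ t) (B t) f) :=
  (integrable_norm_sq_realFourier (hc.integrable_mul_diffusion t hf₁)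
    (hc.memLp_mul_diffusion t hf₂)).add (integrable_finsetSum _ fun j _ =>
      integrable_norm_sq_realFourier (hc.integrable_mul_drift t j hf₁)
        (hc.memLp_mul_drift t j hf₂))

lemma sq_add_sum_sq_mul_le (hc : IsBoundedCoeff M C Ψ B) (t : ℝ) (r : ℝ)
    (x : EuclideanSpace ℝ (Fin d)) :
    (r * Ψ t x) ^ 2 + ∑ j, (r * B t x j) ^ 2 ≤ (M ^ 2 + C ^ 2) * r ^ 2 := by
  have hΨ : Ψ t x ^ 2 ≤ M ^ 2 := sq_le_sq' (abs_le.1 (hc.abs_diffusion_le t x)).1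
    (abs_le.1 (hc.abs_diffusion_le t x)).2
  have hB : ‖B t x‖ ^ 2 ≤ C ^ 2 := pow_le_pow_left₀ (norm_nonneg _) (hc.norm_drift_le t x) 2
  calc (r * Ψ t x) ^ 2 + ∑ j, (r * B t x j) ^ 2 = (Ψ t x ^ 2 + ‖B t x‖ ^ 2) * r ^ 2 := by
        simp only [mul_pow, ← Finset.mul_sum, EuclideanSpace.real_norm_sq_eq]
        ring
    _ ≤ (M ^ 2 + C ^ 2) * r ^ 2 := mul_le_mul_of_nonneg_right (add_le_add hΨ hB) (sq_nonneg r)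

lemma integral_fluxNormSq_le (hc : IsBoundedCoeff M C Ψ B) (t : ℝ) (hf₁ : Integrable f)
    (hf₂ : MemLp f 2) :
    ∫ k, fluxNormSq (Ψ t) (B t) f k ≤ (M ^ 2 + C ^ 2) * ∫ x, f x ^ 2 := by
  have hΨ₁ := hc.integrable_mul_diffusion t hf₁
  have hΨ₂ := hc.memLp_mul_diffusion t hf₂
  have hB₁ := fun j => hc.integrable_mul_drift t j hf₁
  have hB₂ := fun j => hc.memLp_mul_drift t j hf₂
  have hBsq := integrable_finsetSum Finset.univ fun j _ => (hB₂ j).integrable_sq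
  have hBhat (j : Fin d) (_ : j ∈ Finset.univ) :=
    integrable_norm_sq_realFourier (hB₁ j) (hB₂ j)
  calc ∫ k, fluxNormSq (Ψ t) (B t) f k
      = (∫ x, (f x * Ψ t x) ^ 2) + ∑ j, ∫ x, (f x * B t x j) ^ 2 := by
        simp only [fluxNormSq]
        rw [integral_add (integrable_norm_sq_realFourier hΨ₁ hΨ₂)
          (integrable_finsetSum _ hBhat), integral_finsetSum _ hBhat,
          integral_norm_sq_realFourier hΨ₁ hΨ₂]
        simp only [integral_norm_sq_realFourier (hB₁ _) (hB₂ _)]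
    _ = ∫ x, (f x * Ψ t x) ^ 2 + ∑ j, (f x * B t x j) ^ 2 := by
        rw [integral_add hΨ₂.integrable_sq hBsq,
          integral_finsetSum _ fun j _ => (hB₂ j).integrable_sq]
    _ ≤ ∫ x, (M ^ 2 + C ^ 2) * f x ^ 2 :=
        integral_mono (hΨ₂.integrable_sq.add hBsq) (hf₂.integrable_sq.const_mul _)
          fun x => hc.sq_add_sum_sq_mul_le t (f x) x
    _ = (M ^ 2 + C ^ 2) * ∫ x, f x ^ 2 := integral_const_mul _ _

lemma integrable_energyRate (hc : IsBoundedCoeff M C Ψ B) (t : ℝ) (hf₁ : Integrable f)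
    (hf₂ : MemLp f 2) : Integrable (energyRate (Ψ t) (B t) f) :=
  (((integrable_norm_sq_realFourier hf₁ hf₂).const_mul 2).add
    ((hc.integrable_fluxNormSq t hf₁ hf₂).const_mul 2)).mono'
    (continuous_energyRate hf₁ (hc.integrable_mul_diffusion t hf₁)
      fun j => hc.integrable_mul_drift t j hf₁).aestronglyMeasurable
    (Eventually.of_forall fun k => abs_energyRate_le f (Ψ t) (B t) k)

lemma integral_abs_energyRate_le (hc : IsBoundedCoeff M C Ψ B) (t : ℝ) (hf₁ : Integrable f)
    (hf₂ : MemLp f 2) :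
    ∫ k, |energyRate (Ψ t) (B t) f k| ≤ 2 * (1 + M ^ 2 + C ^ 2) * ∫ x, f x ^ 2 := by
  have hf := (integrable_norm_sq_realFourier hf₁ hf₂).const_mul 2
  have hflux := (hc.integrable_fluxNormSq t hf₁ hf₂).const_mul 2
  calc ∫ k, |energyRate (Ψ t) (B t) f k|
      ≤ ∫ k, 2 * ‖realFourier f k‖ ^ 2 + 2 * fluxNormSq (Ψ t) (B t) f k :=
        integral_mono (hc.integrable_energyRate t hf₁ hf₂).abs (hf.add hflux)
          fun k => abs_energyRate_le f (Ψ t) (B t) k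
    _ = 2 * (∫ x, f x ^ 2) + 2 * ∫ k, fluxNormSq (Ψ t) (B t) f k := by
        rw [integral_add hf hflux, integral_const_mul, integral_const_mul,
          integral_norm_sq_realFourier hf₁ hf₂]
    _ ≤ 2 * (1 + M ^ 2 + C ^ 2) * ∫ x, f x ^ 2 := by
        linarith [hc.integral_fluxNormSq_le t hf₁ hf₂]

lemma mul_integral_sq_le_integral_inner (hc : IsBoundedCoeff M C Ψ B) (t : ℝ)
    (hγ : ∀ x, γ ≤ Ψ t x) (hf₁ : Integrable f) (hf₂ : MemLp f 2) :
    γ * ∫ x, f x ^ 2 ≤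
      ∫ k, inner ℝ (realFourier f k) (realFourier (fun x => f x * Ψ t x) k) := by
  have hΨ₂ := hc.memLp_mul_diffusion t hf₂
  rw [integral_inner_realFourier hf₁ hf₂ (hc.integrable_mul_diffusion t hf₁) hΨ₂,
    ← integral_const_mul]
  refine integral_mono (hf₂.integrable_sq.const_mul γ) (hf₂.integrable_mul hΨ₂) fun x => ?_
  calc γ * f x ^ 2 ≤ Ψ t x * f x ^ 2 := mul_le_mul_of_nonneg_right (hγ x) (sq_nonneg _)
    _ = f x * (f x * Ψ t x) := by ring

lemma integral_energyRate_le (hc : IsBoundedCoeff M C Ψ B) (t : ℝ) (hγ : ∀ x, γ ≤ Ψ t x)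
    (hε : 0 < ε) (hεγ : ε * (M ^ 2 + C ^ 2) ≤ 2 * γ) (hf₁ : Integrable f) (hf₂ : MemLp f 2) :
    ∫ k, energyRate (Ψ t) (B t) f k ≤ ε⁻¹ * ∫ k, energyDensity f k := by
  have hdissipation := (integrable_inner_realFourier hf₁ hf₂ (hc.integrable_mul_diffusion t hf₁)
    (hc.memLp_mul_diffusion t hf₂)).const_mul (-2)
  have henergy := (integrable_energyDensity hf₁ hf₂).const_mul ε⁻¹
  have hflux := (hc.integrable_fluxNormSq t hf₁ hf₂).const_mul ε
  have hrate : ∫ k, energyRate (Ψ t) (B t) f k ≤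
      -2 * (∫ k, inner ℝ (realFourier f k) (realFourier (fun x => f x * Ψ t x) k)) +
        ε⁻¹ * (∫ k, energyDensity f k) + ε * ∫ k, fluxNormSq (Ψ t) (B t) f k := by
    rw [← integral_const_mul, ← integral_const_mul, ← integral_const_mul,
      ← integral_add' hdissipation henergy, ← integral_add' (hdissipation.add henergy) hflux]
    exact integral_mono (hc.integrable_energyRate t hf₁ hf₂)
      ((hdissipation.add henergy).add hflux) fun k => energyRate_le f (Ψ t) (B t) k hε
  have habsorb : ε * ∫ k, fluxNormSq (Ψ t) (B t) f k ≤ 2 * γ * ∫ x, f x ^ 2 :=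
    calc ε * ∫ k, fluxNormSq (Ψ t) (B t) f k
        ≤ ε * ((M ^ 2 + C ^ 2) * ∫ x, f x ^ 2) :=
          mul_le_mul_of_nonneg_left (hc.integral_fluxNormSq_le t hf₁ hf₂) hε.le
      _ ≤ 2 * γ * ∫ x, f x ^ 2 := by
          rw [← mul_assoc]
          exact mul_le_mul_of_nonneg_right hεγ (integral_nonneg fun x => sq_nonneg _)
  linarith [hc.mul_integral_sq_le_integral_inner t hγ hf₁ hf₂]

end IsBoundedCoeff

end EnergyEstimate

section FourierEvolution

variable {d : ℕ} {T K M C A L γ ε : ℝ} {Ψ : ℝ → EuclideanSpace ℝ (Fin d) → ℝ}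
  {B : ℝ → EuclideanSpace ℝ (Fin d) → EuclideanSpace ℝ (Fin d)}
  {w : ℝ → EuclideanSpace ℝ (Fin d) → ℝ}

namespace IsBoundedL1Curve

lemma mul_of_abs_le (hw : IsBoundedL1Curve K w) {g : ℝ → EuclideanSpace ℝ (Fin d) → ℝ}
    (hg : Measurable (Function.uncurry g)) (hA : ∀ t x, |g t x| ≤ A) :
    IsBoundedL1Curve (A * K) fun t x => w t x * g t x where
  measurable := hw.measurable.mul hg
  integrable t := hw.integrable_mul_of_abs_le hg.of_uncurry_left (hA t) t
  integral_abs_le t := by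
    have hA0 : 0 ≤ A := (abs_nonneg _).trans (hA 0 0)
    calc ∫ x, |w t x * g t x| ≤ ∫ x, A * |w t x| := by
          refine integral_mono (hw.integrable_mul_of_abs_le hg.of_uncurry_left (hA t) t).abs
            ((hw.integrable t).abs.const_mul A) fun x => ?_
          rw [abs_mul, mul_comm]
          exact mul_le_mul_of_nonneg_right (hA t x) (abs_nonneg _)
      _ ≤ A * K := by
          rw [integral_const_mul]
          exact mul_le_mul_of_nonneg_left (hw.integral_abs_le t) hA0

lemma norm_realFourier_le (hw : IsBoundedL1Curve K w) (t : ℝ) (k : EuclideanSpace ℝ (Fin d)) :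
    ‖realFourier (w t) k‖ ≤ K :=
  (_root_.norm_realFourier_le (w t) k).trans (hw.integral_abs_le t)

lemma mul_diffusion (hw : IsBoundedL1Curve K w) (hc : IsBoundedCoeff M C Ψ B) :
    IsBoundedL1Curve (M * K) fun t x => w t x * Ψ t x :=
  hw.mul_of_abs_le hc.measurable_diffusion hc.abs_diffusion_le

lemma mul_drift (hw : IsBoundedL1Curve K w) (hc : IsBoundedCoeff M C Ψ B) (j : Fin d) :
    IsBoundedL1Curve (C * K) fun t x => w t x * B t x j :=
  hw.mul_of_abs_le (hc.measurable_drift_apply j) (hc.abs_drift_apply_le j)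

lemma measurable_fourierFlux (hw : IsBoundedL1Curve K w) (hc : IsBoundedCoeff M C Ψ B) :
    Measurable fun p : ℝ × EuclideanSpace ℝ (Fin d) =>
      fourierFlux (Ψ p.1) (B p.1) (w p.1) p.2 := by
  have hΨ := measurable_realFourier_uncurry (hw.mul_diffusion hc).measurable
  have hB := fun j => measurable_realFourier_uncurry (hw.mul_drift hc j).measurable
  unfold fourierFlux
  fun_prop

lemma measurable_energyRate (hw : IsBoundedL1Curve K w) (hc : IsBoundedCoeff M C Ψ B) :
    Measurable fun p : ℝ × EuclideanSpace ℝ (Fin d) =>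
      energyRate (Ψ p.1) (B p.1) (w p.1) p.2 :=
  (continuous_sobolevWeight.measurable.comp measurable_snd).mul
    (((measurable_realFourier_uncurry hw.measurable).inner
      (hw.measurable_fourierFlux hc)).const_mul 2)

lemma norm_fourierFlux_le (hw : IsBoundedL1Curve K w) (hc : IsBoundedCoeff M C Ψ B) (t : ℝ)
    (k : EuclideanSpace ℝ (Fin d)) :
    ‖fourierFlux (Ψ t) (B t) (w t) k‖ ≤
      (2 * Real.pi * ‖k‖) ^ 2 * (M * K) + ∑ j, |2 * Real.pi * k j| * (C * K) := by
  refine (norm_sub_le _ _).trans (add_le_add ?_ ?_)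
  · rw [norm_mul, norm_neg, Complex.norm_real, Real.norm_of_nonneg (sq_nonneg _)]
    exact mul_le_mul_of_nonneg_left ((hw.mul_diffusion hc).norm_realFourier_le t k) (sq_nonneg _)
  · rw [norm_mul, Complex.norm_I, one_mul]
    refine norm_sum_le_of_le _ fun j _ => ?_
    rw [norm_mul, Complex.norm_real, Real.norm_eq_abs]
    exact mul_le_mul_of_nonneg_left ((hw.mul_drift hc j).norm_realFourier_le t k) (abs_nonneg _)

lemma intervalIntegrable_fourierFlux (hw : IsBoundedL1Curve K w) (hc : IsBoundedCoeff M C Ψ B)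
    (k : EuclideanSpace ℝ (Fin d)) (a b : ℝ) :
    IntervalIntegrable (fun s => fourierFlux (Ψ s) (B s) (w s) k) volume a b :=
  intervalIntegrable_const.mono_fun'
    ((hw.measurable_fourierFlux hc).comp measurable_prodMk_right).aestronglyMeasurable
    (Eventually.of_forall fun t => hw.norm_fourierFlux_le hc t k)

lemma memLp_two (hw : IsBoundedL1Curve K w) {t : ℝ} (hL : ∀ᵐ x, |w t x| ≤ L) :
    MemLp (w t) 2 := by
  have hmeas := (hw.integrable t).aestronglyMeasurable
  refine (memLp_two_iff_integrable_sq hmeas).2 ?_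
  simpa only [sq] using (hw.integrable t).mul_bdd hmeas hL

lemma integral_sq_le (hw : IsBoundedL1Curve K w) {t : ℝ} (hL : ∀ᵐ x, |w t x| ≤ L) :
    ∫ x, w t x ^ 2 ≤ L * K := by
  obtain ⟨x₀, hx₀⟩ := hL.exists
  have hL0 : 0 ≤ L := (abs_nonneg _).trans hx₀
  calc ∫ x, w t x ^ 2 ≤ ∫ x, L * |w t x| := by
        refine integral_mono_ae (hw.memLp_two hL).integrable_sq
          ((hw.integrable t).abs.const_mul L) (hL.mono fun x hx => ?_)
        calc w t x ^ 2 = |w t x| * |w t x| := by rw [abs_mul_abs_self, sq]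
          _ ≤ L * |w t x| := mul_le_mul_of_nonneg_right hx (abs_nonneg _)
    _ ≤ L * K := by
        rw [integral_const_mul]
        exact mul_le_mul_of_nonneg_left (hw.integral_abs_le t) hL0

lemma integrable_energyRate_prod (hw : IsBoundedL1Curve K w) (hc : IsBoundedCoeff M C Ψ B)
    (hL : ∀ᵐ t ∂volume.restrict (Ioc 0 T), ∀ᵐ x, |w t x| ≤ L) :
    Integrable (fun p : ℝ × EuclideanSpace ℝ (Fin d) =>
      energyRate (Ψ p.1) (B p.1) (w p.1) p.2) ((volume.restrict (Ioc 0 T)).prod volume) := by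
  have hmeas := hw.measurable_energyRate hc
  refine (integrable_prod_iff hmeas.aestronglyMeasurable).2 ⟨?_, ?_⟩
  · filter_upwards [hL] with t ht
    exact hc.integrable_energyRate t (hw.integrable t) (hw.memLp_two ht)
  · refine (integrable_const (2 * (1 + M ^ 2 + C ^ 2) * (L * K))).mono'
      hmeas.norm.stronglyMeasurable.integral_prod_right'.aestronglyMeasurable ?_
    filter_upwards [hL] with t ht
    rw [Real.norm_of_nonneg (integral_nonneg fun _ => norm_nonneg _)]
    exact (hc.integral_abs_energyRate_le t (hw.integrable t) (hw.memLp_two ht)).trans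
      (mul_le_mul_of_nonneg_left (hw.integral_sq_le ht) (by positivity))

end IsBoundedL1Curve

lemma eq_of_forall_re_exp_mul_eq {z₁ z₂ : ℂ}
    (h : ∀ a : ℝ, (Complex.exp (-(a * Complex.I)) * z₁).re =
      (Complex.exp (-(a * Complex.I)) * z₂).re) : z₁ = z₂ := by
  refine Complex.ext (by simpa using h 0) ?_
  simpa [Complex.exp_neg, Complex.exp_pi_div_two_mul_I] using h (Real.pi / 2)

namespace IsIntegratedSolution

lemma realFourier_eq_integral_fourierFlux (hw : IsIntegratedSolution T K Ψ B w)
    (hc : IsBoundedCoeff M C Ψ B) (hw0 : w 0 =ᵐ[volume] 0) {t : ℝ} (ht : t ∈ Icc 0 T)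
    (k : EuclideanSpace ℝ (Fin d)) :
    realFourier (w t) k = ∫ s in 0..t, fourierFlux (Ψ s) (B s) (w s) k := by
  refine eq_of_forall_re_exp_mul_eq fun a => ?_
  have hinit : ∫ x, w 0 x * planeWave a k x = 0 :=
    integral_eq_zero_of_ae (hw0.mono fun x hx => by simp [hx])
  calc (Complex.exp (-(a * Complex.I)) * realFourier (w t) k).re
      = ∫ s in 0..t, ∫ x, w s x * kolmogorov (Ψ s) (B s) (planeWave a k) x := by
        rw [← integral_mul_planeWave (hw.integrable t), ← hw.integral_mul_sub_of_bounded hc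
          (isBoundedTestFunction_planeWave a k) ht, hinit, sub_zero]
    _ = ∫ s in 0..t, (Complex.exp (-(a * Complex.I)) * fourierFlux (Ψ s) (B s) (w s) k).re := by
        refine intervalIntegral.integral_congr fun s _ => ?_
        exact integral_mul_kolmogorov_planeWave (hc.integrable_mul_diffusion s (hw.integrable s))
          (fun j => hc.integrable_mul_drift s j (hw.integrable s)) a k
    _ = (Complex.exp (-(a * Complex.I)) * ∫ s in 0..t, fourierFlux (Ψ s) (B s) (w s) k).re := by
        rw [← intervalIntegral.integral_const_mul]
        exact Complex.reCLM.intervalIntegral_comp_comm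
          ((hw.intervalIntegrable_fourierFlux hc k 0 t).const_mul _)

lemma energyDensity_eq_integral_energyRate (hw : IsIntegratedSolution T K Ψ B w)
    (hc : IsBoundedCoeff M C Ψ B) (hw0 : w 0 =ᵐ[volume] 0) {t : ℝ} (ht : t ∈ Icc 0 T)
    (k : EuclideanSpace ℝ (Fin d)) :
    energyDensity (w t) k = ∫ s in 0..t, energyRate (Ψ s) (B s) (w s) k := by
  simp only [energyDensity, energyRate]
  rw [intervalIntegral.integral_const_mul, hw.realFourier_eq_integral_fourierFlux hc hw0 ht,
    norm_sq_primitive_eq (hw.intervalIntegrable_fourierFlux hc k 0 t)]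
  congr 1
  refine intervalIntegral.integral_congr fun s hs => ?_
  rw [uIcc_of_le ht.1] at hs
  simp only [hw.realFourier_eq_integral_fourierFlux hc hw0 ⟨hs.1, hs.2.trans ht.2⟩]

lemma integrable_energyDensity (hw : IsIntegratedSolution T K Ψ B w)
    (hc : IsBoundedCoeff M C Ψ B) (hw0 : w 0 =ᵐ[volume] 0)
    (hL : ∀ᵐ s ∂volume.restrict (Ioc 0 T), ∀ᵐ x, |w s x| ≤ L) {t : ℝ} (ht : t ∈ Icc 0 T) :
    Integrable (energyDensity (w t)) := by
  have hLt := ae_restrict_of_ae_restrict_of_subset (Ioc_subset_Ioc_right ht.2) hL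
  refine (hw.integrable_energyRate_prod hc hLt).integral_prod_right.congr
    (Eventually.of_forall fun k => ?_)
  simp only [hw.energyDensity_eq_integral_energyRate hc hw0 ht,
    intervalIntegral.integral_of_le ht.1]

lemma integral_energyDensity_eq (hw : IsIntegratedSolution T K Ψ B w)
    (hc : IsBoundedCoeff M C Ψ B) (hw0 : w 0 =ᵐ[volume] 0)
    (hL : ∀ᵐ s ∂volume.restrict (Ioc 0 T), ∀ᵐ x, |w s x| ≤ L) {t : ℝ} (ht : t ∈ Icc 0 T) :
    ∫ k, energyDensity (w t) k = ∫ s in 0..t, ∫ k, energyRate (Ψ s) (B s) (w s) k := by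
  simp only [hw.energyDensity_eq_integral_energyRate hc hw0 ht,
    intervalIntegral.integral_of_le ht.1]
  exact (integral_integral_swap (hw.integrable_energyRate_prod hc
    (ae_restrict_of_ae_restrict_of_subset (Ioc_subset_Ioc_right ht.2) hL))).symm

lemma continuousOn_integral_energyDensity (hw : IsIntegratedSolution T K Ψ B w)
    (hc : IsBoundedCoeff M C Ψ B) (hw0 : w 0 =ᵐ[volume] 0)
    (hL : ∀ᵐ s ∂volume.restrict (Ioc 0 T), ∀ᵐ x, |w s x| ≤ L) :
    ContinuousOn (fun t => ∫ k, energyDensity (w t) k) (Icc 0 T) := by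
  have hrate : IntegrableOn (fun s => ∫ k, energyRate (Ψ s) (B s) (w s) k) (Icc 0 T) :=
    (integrableOn_Icc_iff_integrableOn_Ioc (by simp)).2
      (hw.integrable_energyRate_prod hc hL).integral_prod_left
  refine (intervalIntegral.continuousOn_primitive hrate).congr fun t ht => ?_
  rw [hw.integral_energyDensity_eq hc hw0 hL ht, intervalIntegral.integral_of_le ht.1]

lemma integral_energyDensity_le (hw : IsIntegratedSolution T K Ψ B w)
    (hc : IsBoundedCoeff M C Ψ B) (hγ : ∀ t x, γ ≤ Ψ t x) (hε : 0 < ε)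
    (hεγ : ε * (M ^ 2 + C ^ 2) ≤ 2 * γ) (hw0 : w 0 =ᵐ[volume] 0)
    (hL : ∀ᵐ s ∂volume.restrict (Ioc 0 T), ∀ᵐ x, |w s x| ≤ L) {t : ℝ} (ht : t ∈ Icc 0 T) :
    ∫ k, energyDensity (w t) k ≤ ε⁻¹ * ∫ s in 0..t, ∫ k, energyDensity (w s) k := by
  have hLt := ae_restrict_of_ae_restrict_of_subset (Ioc_subset_Ioc_right ht.2) hL
  have henergy : IntervalIntegrable (fun s => ∫ k, energyDensity (w s) k) volume 0 t :=
    ((hw.continuousOn_integral_energyDensity hc hw0 hL).mono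
      (Icc_subset_Icc_right ht.2)).intervalIntegrable_of_Icc ht.1
  rw [hw.integral_energyDensity_eq hc hw0 hL ht, ← intervalIntegral.integral_const_mul]
  refine intervalIntegral.integral_mono_ae_restrict ht.1
    ((intervalIntegrable_iff_integrableOn_Ioc_of_le ht.1).2
      (hw.integrable_energyRate_prod hc hLt).integral_prod_left) (henergy.const_mul _) ?_
  rw [restrict_Ioc_eq_restrict_Icc] at hLt
  filter_upwards [hLt] with s hs
  exact hc.integral_energyRate_le s (hγ s) hε hεγ (hw.integrable s) (hw.memLp_two hs)

theorem ae_eq_zero_of_ae_eq_zero_initial (hw : IsIntegratedSolution T K Ψ B w)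
    (hc : IsBoundedCoeff M C Ψ B) (hγ0 : 0 < γ) (hγ : ∀ t x, γ ≤ Ψ t x)
    (hw0 : w 0 =ᵐ[volume] 0)
    (hL : ∀ᵐ s ∂volume.restrict (Ioc 0 T), ∀ᵐ x, |w s x| ≤ L) {t : ℝ} (ht : t ∈ Icc 0 T) :
    w t =ᵐ[volume] 0 := by
  obtain ⟨ε, hε, hεγ⟩ : ∃ ε > 0, ε * (M ^ 2 + C ^ 2) ≤ 2 * γ := by
    refine ⟨γ / (M ^ 2 + C ^ 2 + 1), by positivity, ?_⟩
    rw [div_mul_eq_mul_div, div_le_iff₀ (by positivity)]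
    nlinarith [sq_nonneg M, sq_nonneg C]
  have hzero : ∫ k, energyDensity (w t) k = 0 :=
    eq_zero_of_le_mul_integral (hw.continuousOn_integral_energyDensity hc hw0 hL)
      (fun s _ => integral_nonneg (energyDensity_nonneg (w s)))
      (fun s hs => hw.integral_energyDensity_le hc hγ hε hεγ hw0 hL hs) ht
  refine ae_eq_zero_of_realFourier_ae_eq_zero (hw.integrable t) ?_
  filter_upwards [(integral_eq_zero_iff_of_nonneg (energyDensity_nonneg (w t))
    (hw.integrable_energyDensity hc hw0 hL ht)).1 hzero] with k hk
  exact norm_eq_zero.1 (pow_eq_zero_iff two_ne_zero |>.1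
    ((mul_eq_zero.1 hk).resolve_left (sobolevWeight_pos k).ne'))

end IsIntegratedSolution

end FourierEvolution

section Uniqueness

variable {d : ℕ} {T M C γ γ0 : ℝ}

lemma exists_isBoundedCoeff_ae_eq {Ψ : ℝ → EuclideanSpace ℝ (Fin d) → ℝ}
    {B : ℝ → EuclideanSpace ℝ (Fin d) → EuclideanSpace ℝ (Fin d)}
    (hΨm : Measurable (Function.uncurry Ψ)) (hBm : Measurable (Function.uncurry B))
    {μ : Measure (ℝ × EuclideanSpace ℝ (Fin d))}
    (hΨ : ∀ᵐ p ∂μ, γ ≤ Ψ p.1 p.2 ∧ Ψ p.1 p.2 ≤ M) (hB : ∀ᵐ p ∂μ, ‖B p.1 p.2‖ ≤ C) :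
    ∃ Ψ' B', IsBoundedCoeff (|γ| + |M|) |C| Ψ' B' ∧ (∀ t x, γ ≤ Ψ' t x) ∧
      ∀ᵐ p ∂μ, Ψ' p.1 p.2 = Ψ p.1 p.2 ∧ B' p.1 p.2 = B p.1 p.2 := by
  refine ⟨fun t x => if γ ≤ Ψ t x ∧ Ψ t x ≤ M then Ψ t x else γ,
    fun t x => if ‖B t x‖ ≤ C then B t x else 0, ⟨?_, ?_, fun t x => ?_, fun t x => ?_⟩,
    fun t x => ?_, ?_⟩
  · exact Measurable.ite ((measurableSet_le measurable_const hΨm).inter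
      (measurableSet_le hΨm measurable_const)) hΨm measurable_const
  · exact Measurable.ite (measurableSet_le hBm.norm measurable_const) hBm measurable_const
  · have hγ := abs_nonneg γ
    have hM := abs_nonneg M
    split_ifs with h
    · exact abs_le.2 ⟨by linarith [neg_abs_le γ], by linarith [le_abs_self M]⟩
    · linarith
  · split_ifs with h
    · exact h.trans (le_abs_self C)
    · exact norm_zero.trans_le (abs_nonneg C)
  · beta_reduce
    split_ifs with h
    exacts [h.1, le_rfl]
  · filter_upwards [hΨ, hB] with p hp hp'
    exact ⟨if_pos hp, if_pos hp'⟩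

lemma HypBeta.quotient_eq_dslope {β Φ : ℝ → ℝ} (hβ : HypBeta β γ0) (hΦ0 : Φ 0 = deriv β 0)
    (hΦ : ∀ r : ℝ, r ≠ 0 → Φ r = β r / r) : Φ = dslope β 0 := by
  ext r
  rcases eq_or_ne r 0 with rfl | hr
  · rw [hΦ0, dslope_same]
  · rw [hΦ r hr, dslope_of_ne _ hr, slope_def_field, hβ.1, sub_zero, sub_zero]

lemma HypBeta.continuous_dslope {β : ℝ → ℝ} (hβ : HypBeta β γ0) : Continuous (dslope β 0) := by
  rw [← continuousOn_univ, continuousOn_dslope univ_mem]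
  exact ⟨hβ.2.1.continuous.continuousOn, hβ.2.1.differentiable one_ne_zero 0⟩

lemma HypBeta.le_dslope {β : ℝ → ℝ} (hβ : HypBeta β γ0) (r : ℝ) : γ0 ≤ dslope β 0 r := by
  have hclosed : IsClosed {r | γ0 ≤ dslope β 0 r} :=
    isClosed_le continuous_const hβ.continuous_dslope
  refine hclosed.closure_subset_iff.2 (fun r (hr : r ≠ 0) => ?_) (dense_compl_singleton 0 r)
  have hmono := hβ.2.2.2 r 0
  have hr2 : 0 < r ^ 2 := by positivity
  rw [sub_zero] at hmono
  change γ0 ≤ dslope β 0 r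
  rw [dslope_of_ne _ hr, slope_def_field, sub_zero,
    ← mul_div_mul_right _ _ hr, ← sq, le_div_iff₀ hr2]
  exact hmono

lemma ae_prod_abs_le_of_forall_ae_abs_le {u : ℝ → EuclideanSpace ℝ (Fin d) → ℝ}
    (hu : Measurable (Function.uncurry u)) (hC : ∀ t ∈ Ioo 0 T, ∀ᵐ x, |u t x| ≤ C) :
    ∀ᵐ p ∂((volume.restrict (Ioo 0 T)).prod volume), |u p.1 p.2| ≤ C :=
  (Measure.ae_prod_iff_ae_ae (measurableSet_le hu.norm measurable_const)).2
    (ae_restrict_of_forall_mem measurableSet_Ioo hC)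

lemma HypBeta.exists_ae_dslope_bounds {β : ℝ → ℝ} (hβ : HypBeta β γ0)
    {u : ℝ → EuclideanSpace ℝ (Fin d) → ℝ} (hu : Measurable (Function.uncurry u))
    (hC : ∀ t ∈ Ioo 0 T, ∀ᵐ x, |u t x| ≤ C) :
    ∃ M, ∀ᵐ p ∂((volume.restrict (Ioo 0 T)).prod volume),
      γ0 ≤ dslope β 0 (u p.1 p.2) ∧ dslope β 0 (u p.1 p.2) ≤ M := by
  obtain ⟨M, hM⟩ := (isCompact_Icc (a := -C) (b := C)).exists_bound_of_continuousOn
    hβ.continuous_dslope.continuousOn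
  refine ⟨M, ?_⟩
  filter_upwards [ae_prod_abs_le_of_forall_ae_abs_le hu hC] with p hp
  exact ⟨hβ.le_dslope _, (le_abs_self _).trans (hM _ (abs_le.1 hp))⟩

theorem linearized_fokker_planck_uniqueness_general (hT : 0 < T)
    {Ψ : ℝ → EuclideanSpace ℝ (Fin d) → ℝ}
    {B : ℝ → EuclideanSpace ℝ (Fin d) → EuclideanSpace ℝ (Fin d)}
    (hΨm : Measurable (Function.uncurry Ψ)) (hBm : Measurable (Function.uncurry B))
    (hγ : 0 < γ)
    (hΨ : ∀ᵐ p ∂((volume.restrict (Ioo 0 T)).prod volume), γ ≤ Ψ p.1 p.2 ∧ Ψ p.1 p.2 ≤ M)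
    (hB : ∀ᵐ p ∂((volume.restrict (Ioo 0 T)).prod volume), ‖B p.1 p.2‖ ≤ C)
    {v0 : EuclideanSpace ℝ (Fin d) → ℝ} {v₁ v₂ : ℝ → EuclideanSpace ℝ (Fin d) → ℝ}
    (hsol₁ : IsLinDistSol T Ψ B v0 v₁) (hsol₂ : IsLinDistSol T Ψ B v0 v₂)
    (hbdd₁ : ∃ L, ∀ᵐ p ∂((volume.restrict (Ioo 0 T)).prod volume), |v₁ p.1 p.2| ≤ L)
    (hbdd₂ : ∃ L, ∀ᵐ p ∂((volume.restrict (Ioo 0 T)).prod volume), |v₂ p.1 p.2| ≤ L) :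
    ∀ t ∈ Icc 0 T, v₁ t =ᵐ[volume] v₂ t := by
  obtain ⟨Ψ', B', hc, hγ', heq⟩ := exists_isBoundedCoeff_ae_eq hΨm hBm hΨ hB
  have hcoeff := Measure.ae_ae_of_ae_prod heq
  obtain ⟨K₁, w₁, hw₁, hwv₁⟩ := hsol₁.exists_isIntegratedSolution hT hc hcoeff
  obtain ⟨K₂, w₂, hw₂, hwv₂⟩ := hsol₂.exists_isIntegratedSolution hT hc hcoeff
  obtain ⟨L₁, hL₁⟩ := hbdd₁
  obtain ⟨L₂, hL₂⟩ := hbdd₂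
  have h0 : (0 : ℝ) ∈ Icc 0 T := left_mem_Icc.2 hT.le
  have hinit : (fun x => w₁ 0 x - w₂ 0 x) =ᵐ[volume] 0 := by
    filter_upwards [hwv₁ 0 h0, hwv₂ 0 h0, hsol₁.2.2.2, hsol₂.2.2.2] with x h₁ h₂ h₁' h₂'
    rw [h₁, h₂, h₁', h₂', sub_self, Pi.zero_apply]
  have hbdd : ∀ᵐ t ∂volume.restrict (Ioc 0 T), ∀ᵐ x, |w₁ t x - w₂ t x| ≤ L₁ + L₂ := by
    rw [← restrict_Ioo_eq_restrict_Ioc]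
    filter_upwards [Measure.ae_ae_of_ae_prod hL₁, Measure.ae_ae_of_ae_prod hL₂,
      ae_restrict_mem measurableSet_Ioo] with t ht₁ ht₂ ht
    filter_upwards [ht₁, ht₂, hwv₁ t (Ioo_subset_Icc_self ht),
      hwv₂ t (Ioo_subset_Icc_self ht)] with x hx₁ hx₂ h₁ h₂
    rw [h₁, h₂]
    exact (abs_sub _ _).trans (add_le_add hx₁ hx₂)
  intro t ht
  filter_upwards [(hw₁.sub hc hw₂).ae_eq_zero_of_ae_eq_zero_initial hc hγ hγ' hinit hbdd ht,
    hwv₁ t ht, hwv₂ t ht] with x hx h₁ h₂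
  rw [← h₁, ← h₂]
  exact sub_eq_zero.1 hx

end Uniqueness

/-- Theorem 3.1, linearized uniqueness: under hypotheses (i)–(ii),
given a bounded measurable `u` on `(0,T) × ℝ^d`, with `Ψ(t,x) = Φ(u(t,x))`
(`Φ(r) = β(r)/r`, `Φ(0) = β'(0)`) and `B(t,x) = b(x,u(t,x))`, the linearized
Fokker–Planck equation `∂_t v − Δ(Ψ v) + div(B v) = 0`, `v(0) = v0`, has at most one
distributional solution which is continuous from `[0,T]` to `L¹` and essentially
bounded on `(0,T) × ℝ^d`. -/
theorem linearized_fokker_planck_uniqueness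
    {d : ℕ} (T : ℝ) (hT : 0 < T)
    (β : ℝ → ℝ) (γ0 : ℝ) (hβ : HypBeta β γ0)
    (b : EuclideanSpace ℝ (Fin d) → ℝ → EuclideanSpace ℝ (Fin d)) (hb : HypB b)
    (u : ℝ → EuclideanSpace ℝ (Fin d) → ℝ)
    (hu_meas : Measurable (Function.uncurry u))
    (hu_bdd : ∃ C, ∀ t ∈ Ioo (0 : ℝ) T, ∀ᵐ x, |u t x| ≤ C)
    (Φ : ℝ → ℝ) (hΦ0 : Φ 0 = deriv β 0) (hΦ : ∀ r : ℝ, r ≠ 0 → Φ r = β r / r)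
    (v0 : EuclideanSpace ℝ (Fin d) → ℝ)
    (hv0L1 : Integrable v0) (hv0Linf : ∃ C, ∀ᵐ x, |v0 x| ≤ C)
    (v₁ v₂ : ℝ → EuclideanSpace ℝ (Fin d) → ℝ)
    (hsol₁ : IsLinDistSol T (fun t x => Φ (u t x)) (fun t x => b x (u t x)) v0 v₁)
    (hsol₂ : IsLinDistSol T (fun t x => Φ (u t x)) (fun t x => b x (u t x)) v0 v₂)
    (hcont₁ : ∀ s ∈ Icc (0 : ℝ) T,
      Tendsto (fun t => ∫ x, |v₁ t x - v₁ s x|) (nhdsWithin s (Icc 0 T)) (nhds 0))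
    (hcont₂ : ∀ s ∈ Icc (0 : ℝ) T,
      Tendsto (fun t => ∫ x, |v₂ t x - v₂ s x|) (nhdsWithin s (Icc 0 T)) (nhds 0))
    (hbdd₁ : ∃ C, ∀ᵐ p ∂((volume.restrict (Ioo 0 T)).prod
      (volume : Measure (EuclideanSpace ℝ (Fin d)))), |v₁ p.1 p.2| ≤ C)
    (hbdd₂ : ∃ C, ∀ᵐ p ∂((volume.restrict (Ioo 0 T)).prod
      (volume : Measure (EuclideanSpace ℝ (Fin d)))), |v₂ p.1 p.2| ≤ C) :
    ∀ t ∈ Icc (0 : ℝ) T, v₁ t =ᵐ[volume] v₂ t := by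
  obtain rfl := hβ.quotient_eq_dslope hΦ0 hΦ
  obtain ⟨C, hC⟩ := hu_bdd
  obtain ⟨M, hM⟩ := hβ.exists_ae_dslope_bounds hu_meas hC
  obtain ⟨hb_contDiff, ⟨Cb, hCb⟩, -⟩ := hb
  exact linearized_fokker_planck_uniqueness_general (Ψ := fun t x => dslope β 0 (u t x))
    (B := fun t x => b x (u t x)) hT (hβ.continuous_dslope.measurable.comp hu_meas)
    (hb_contDiff.continuous.measurable.comp (measurable_snd.prodMk hu_meas)) hβ.2.2.1 hM
    (Eventually.of_forall fun p => hCb p.2 (u p.1 p.2)) hsol₁ hsol₂ hbdd₁ hbdd₂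

end
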